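/- arXiv:1408.1742 — 2 statements merged into one kernel-verified Lean document; each statement's English description precedes it below -/
import Mathlib

section
/- Let s ≥ 2, let ψ : [0,1]^{s-1} → ℝ≥0 be measurable with ψ ≤ L (0 < L < ∞), C = ∫_{[0,1]^{s-1}} ψ > 0, A = {z ∈ [0,1]^s : ψ(z_1,…,z_{s-1}) ≥ L z_s}, and assume ∂A admits an (s−1)-dimensional Minkowski content M_A ∈ (0,∞). With the product measure μ_m = ⊗_c Unif(Q_c) over the M = m^s grid cubes, N = #{c : x_c ∈ A} and Y the projections of the accepted points onto the first s−1 coordinates, there exists m_0 such that for all m ≥ m_0 and every real q with 2 ≤ q < ∞: (E_{μ_m}[N^q L_{q,N,ψ}^q(Y)])^{1/q} ≤ (3 s^{1/2} M_A m^{s−1})^{1 − 1/q}, where L_{q,N,ψ}(Y) = (∫_{[0,1]^{s-1}} |(1/N) Σ_{n=0}^{N−1} 1_{[0,t)}(y_n) − (1/C) ∫_{[0,t)} ψ|^q dt)^{1/q}. -/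
open MeasureTheory Set Filter

/-- The half-open anchored box `[0,t) = ∏_j [0, t_j)`. -/
def lowerBox {d : ℕ} (t : Fin d → ℝ) : Set (Fin d → ℝ) :=
  {y | ∀ i, 0 ≤ y i ∧ y i < t i}

/-- The region `A = {z ∈ [0,1]^s : ψ(z_1,…,z_{s-1}) ≥ L z_s}` (with `s = d+1`). -/
def graphRegion {d : ℕ} (ψ : (Fin d → ℝ) → ℝ) (L : ℝ) : Set ((Fin d → ℝ) × ℝ) :=
  {z | z.1 ∈ Icc (0 : Fin d → ℝ) 1 ∧ z.2 ∈ Icc (0 : ℝ) 1 ∧ L * z.2 ≤ ψ z.1}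

/-- The test set `J_t* = ([0,t) × [0,1]) ∩ A`. -/
def Jstar {d : ℕ} (ψ : (Fin d → ℝ) → ℝ) (L : ℝ) (t : Fin d → ℝ) : Set ((Fin d → ℝ) × ℝ) :=
  (lowerBox t ×ˢ Icc (0 : ℝ) 1) ∩ graphRegion ψ L

/-- The closed Euclidean `ε`-neighborhood of a set `E ⊆ ℝ^{d} × ℝ = ℝ^{d+1}`. -/
def euclNbhdP {d : ℕ} (E : Set ((Fin d → ℝ) × ℝ)) (ε : ℝ) : Set ((Fin d → ℝ) × ℝ) :=
  {x | ∃ y ∈ E, Real.sqrt ((∑ i, (x.1 i - y.1 i) ^ 2) + (x.2 - y.2) ^ 2) ≤ ε}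

/-- `∂A` admits the `(s-1)`-dimensional Minkowski content `M` (with `s = d+1`). -/
def HasMinkowskiContentP {d : ℕ} (A : Set ((Fin d → ℝ) × ℝ)) (M : ℝ) : Prop :=
  Tendsto (fun ε : ℝ => (volume (euclNbhdP (frontier A) ε)).toReal / (2 * ε))
    (nhdsWithin 0 (Set.Ioi 0)) (nhds M)

/-- The grid cube `Q_c = ∏_{j=1}^{d+1} [c_j/m, (c_j+1)/m)`. -/
def gridCubeP {d m : ℕ} (c : (Fin d → Fin m) × Fin m) : Set ((Fin d → ℝ) × ℝ) :=
  {z | (∀ i, (c.1 i : ℝ) / m ≤ z.1 i ∧ z.1 i < ((c.1 i : ℝ) + 1) / m) ∧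
       ((c.2 : ℝ) / m ≤ z.2 ∧ z.2 < ((c.2 : ℝ) + 1) / m)}

/-- The stratified-input measure `μ_m = ⊗_c Unif(Q_c)`: the product over all grid cubes of
the uniform probability distribution on `Q_c`. -/
noncomputable def stratifiedMeasure (d m : ℕ) :
    Measure (((Fin d → Fin m) × Fin m) → (Fin d → ℝ) × ℝ) :=
  Measure.pi fun c => (volume (gridCubeP c))⁻¹ • volume.restrict (gridCubeP c)

/-!
Fix `t`, let `A` be the region under the graph and let `Δ` be the number of sample points in
`A` above `[0,t)`, minus `vol(A above [0,t)) / vol A` times the number of sample points in `A`.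
Since the cubes exhaust `[0,1]^s`, `Δ` is a sum of independent terms with total mean `0`, and a cube
contributes a constant unless it meets both `A` and its complement, or lies in `A` and is cut by a
face of `[0,t)`. If there are at most `K` such undecided cubes, then `|Δ| ≤ K` and
`E Δ² ≤ K`, so that `E |Δ|^q ≤ K^(q-2) E Δ² ≤ K^(q-1)`.

It remains to pack the undecided cubes into the `√s/m`-neighbourhood `V` of `∂A`.
* A cube of the first kind meets `∂A`, hence lies in `V`. The layer of thickness `1/m` below the
  base of `A` also lies in `V` and is disjoint from all cubes, so `#cubes + m^(s-1) ≤ m^s vol V`.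
* From a cube of the second kind, move upwards in the coordinate direction normal to the face that
  cuts it until `∂A` is reached. Around the exit point there is a tube in `V` of the volume of two
  cubes. Two such tubes are disjoint, because the cubes they start from lie on the upper faces of
  one and the same box of indices, so twice the number of these cubes is at most `m^s vol V`.

Together `K ≤ (3/2) m^s vol V - m^(s-1)`. As `m^s vol V ∼ 2 √s M_A m^(s-1)`, the negative
term absorbs the error in the limit that defines `M_A`.
-/

section FrontierCrossing

variable {X : Type*} [TopologicalSpace X] {A : Set X}

theorem inter_frontier_nonempty_of_isPreconnected {S : Set X} (hS : IsPreconnected S)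
    (hA : (S ∩ closure A).Nonempty) (hAc : (S ∩ Aᶜ).Nonempty) : (S ∩ frontier A).Nonempty := by
  rw [frontier_eq_closure_inter_closure]
  refine isPreconnected_closed_iff.1 hS _ _ isClosed_closure isClosed_closure (fun x _ => ?_) hA
    (hAc.mono (inter_subset_inter_right _ subset_closure))
  exact (em (x ∈ A)).imp (subset_closure ·) (subset_closure ·)

theorem exists_ge_mem_frontier_of_mapsTo_Ico {f : ℝ → X} (hf : Continuous f) {a b b' : ℝ}
    (hab : a < b) (hbb' : b ≤ b') (hA : MapsTo f (Ico a b) A) (hb' : f b' ∉ A) :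
    ∃ τ, b ≤ τ ∧ f τ ∈ frontier A := by
  have hb : f b ∈ closure A :=
    map_mem_closure hf (by rw [closure_Ico hab.ne]; exact right_mem_Icc.2 hab.le) hA
  obtain ⟨_, ⟨τ, hτ, rfl⟩, hτA⟩ :=
    inter_frontier_nonempty_of_isPreconnected (isPreconnected_Icc.image f hf.continuousOn)
      ⟨f b, mem_image_of_mem f (left_mem_Icc.2 hbb'), hb⟩
      ⟨f b', mem_image_of_mem f (right_mem_Icc.2 hbb'), hb'⟩
  exact ⟨τ, hτ.1, hτA⟩

end FrontierCrossing

theorem card_mul_le_measureReal_of_pairwise_disjoint {ι α : Type*} [Fintype ι] [MeasurableSpace α]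
    {μ : Measure α} {D : ι → Set α} {E : Set α} {v : ℝ} (hE : μ E ≠ ⊤)
    (hmeas : ∀ i, MeasurableSet (D i)) (hdisj : Pairwise (Function.onFun Disjoint D))
    (hv : ∀ i, v ≤ μ.real (D i)) (hsub : ∀ i, D i ⊆ E) : Fintype.card ι * v ≤ μ.real E :=
  calc Fintype.card ι * v = ∑ _i : ι, v := by simp
    _ ≤ ∑ i, μ.real (D i) := Finset.sum_le_sum fun i _ => hv i
    _ = μ.real (⋃ i, D i) :=
      (measureReal_iUnion_fintype hdisj hmeas fun i => measure_ne_top_of_subset (hsub i) hE).symm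
    _ ≤ μ.real E := measureReal_mono (iUnion_subset hsub) hE

theorem volumeReal_univ_pi_prod {ι : Type*} [Fintype ι] (I : ι → Set ℝ) (J : Set ℝ) :
    volume.real ((univ.pi I) ×ˢ J) = (∏ i, volume.real (I i)) * volume.real J := by
  simp_rw [Measure.volume_eq_prod, measureReal_prod_prod, measureReal_def, volume_pi_pi,
    ENNReal.toReal_prod]

section EuclideanNeighbourhood

variable {d : ℕ} {E : Set ((Fin d → ℝ) × ℝ)}

theorem mem_euclNbhdP_of_abs_sub_le {h : ℝ} (hh : 0 ≤ h) {z p : (Fin d → ℝ) × ℝ} (hp : p ∈ E)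
    (h₁ : ∀ j, |z.1 j - p.1 j| ≤ h) (h₂ : |z.2 - p.2| ≤ h) :
    z ∈ euclNbhdP E (√(d + 1) * h) := by
  refine ⟨p, hp, Real.sqrt_le_iff.2 ⟨by positivity, ?_⟩⟩
  calc ∑ i, (z.1 i - p.1 i) ^ 2 + (z.2 - p.2) ^ 2 ≤ ∑ _i : Fin d, h ^ 2 + h ^ 2 :=
        add_le_add (Finset.sum_le_sum fun i _ => sq_le_sq.2 ((h₁ i).trans (le_abs_self h)))
          (sq_le_sq.2 (h₂.trans (le_abs_self h)))
    _ = (√(d + 1) * h) ^ 2 := by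
        rw [mul_pow, Real.sq_sqrt (by positivity)]
        simp only [Finset.sum_const, Finset.card_univ, Fintype.card_fin, nsmul_eq_mul]
        ring

theorem euclNbhdP_subset_cthickening (ε : ℝ) : euclNbhdP E ε ⊆ Metric.cthickening ε E := by
  rintro z ⟨y, hy, hzy⟩
  have hε : 0 ≤ ε := (Real.sqrt_nonneg _).trans hzy
  have hsq := (Real.sqrt_le_left hε).1 hzy
  have hsum : 0 ≤ ∑ i, (z.1 i - y.1 i) ^ 2 := Finset.sum_nonneg fun i _ => sq_nonneg _
  refine Metric.mem_cthickening_of_dist_le z y ε E hy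
    (max_le ((dist_pi_le_iff hε).2 fun i => ?_) ?_)
  · have hi := Finset.single_le_sum (f := fun i => (z.1 i - y.1 i) ^ 2)
      (fun i _ => sq_nonneg _) (Finset.mem_univ i)
    exact abs_le_of_sq_le_sq (by linarith [sq_nonneg (z.2 - y.2)]) hε
  · exact abs_le_of_sq_le_sq (by linarith) hε

theorem volume_euclNbhdP_frontier_ne_top (hE : E ⊆ Icc 0 1) (ε : ℝ) :
    volume (euclNbhdP (frontier E) ε) ≠ ⊤ := by
  have hbdd : Bornology.IsBounded (frontier E) :=
    isCompact_Icc.isBounded.subset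
      (frontier_subset_closure.trans (closure_minimal hE isClosed_Icc))
  exact (hbdd.cthickening.subset (euclNbhdP_subset_cthickening ε)).measure_lt_top.ne

end EuclideanNeighbourhood

section Grid

/-- Indices of the cubes of the regular grid on `[0,1]^{d+1}` with `m` cells per side; the last
coordinate is kept apart, as in `gridCubeP`. -/
abbrev GridIndex (d m : ℕ) : Type := (Fin d → Fin m) × Fin m

/-- The `k`-th cell `[k/m, (k+1)/m)` of the regular grid of mesh `1/m` on the line; the grid cubes
are products of such cells. -/
def gridInterval (m k : ℕ) : Set ℝ := Ico ((k : ℝ) / m) ((k + 1) / m)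

variable {d m : ℕ}

theorem measurableSet_gridInterval (k : ℕ) : MeasurableSet (gridInterval m k) := measurableSet_Ico

theorem mem_gridInterval_iff {k : ℕ} {x : ℝ} :
    x ∈ gridInterval m k ↔ (k : ℝ) / m ≤ x ∧ x < k / m + (m : ℝ)⁻¹ := by
  rw [gridInterval, add_div, one_div, mem_Ico]

theorem volumeReal_gridInterval (k : ℕ) : volume.real (gridInterval m k) = (m : ℝ)⁻¹ := by
  rw [gridInterval, Real.volume_real_Ico_of_le (by gcongr; linarith)]
  ring

theorem abs_sub_le_of_mem_gridInterval {k : ℕ} {x y : ℝ} (hx : x ∈ gridInterval m k)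
    (hy : y ∈ gridInterval m k) : |x - y| ≤ (m : ℝ)⁻¹ := by
  rw [mem_gridInterval_iff] at hx hy
  rw [abs_le]
  constructor <;> linarith

theorem exists_mem_gridInterval (hm : 0 < m) {x : ℝ} (hx : x ∈ Ico (0 : ℝ) 1) :
    ∃ k : Fin m, x ∈ gridInterval m k := by
  have hm' : (0 : ℝ) < m := Nat.cast_pos.2 hm
  have hxm : 0 ≤ x * m := mul_nonneg hx.1 hm'.le
  refine ⟨⟨⌊x * m⌋₊, (Nat.floor_lt hxm).2 (mul_lt_of_lt_one_left hm' hx.2)⟩, ?_, ?_⟩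
  · exact (div_le_iff₀ hm').2 (Nat.floor_le hxm)
  · exact (lt_div_iff₀ hm').2 (Nat.lt_floor_add_one _)

theorem le_of_div_le_of_lt_succ_div {a b : ℕ} {x : ℝ} (ha : (a : ℝ) / m ≤ x)
    (hb : x < ((b : ℝ) + 1) / m) : a ≤ b := by
  by_contra! hba
  have hba' : (b : ℝ) + 1 ≤ a := by exact_mod_cast hba
  exact (ha.trans_lt hb).not_ge (by gcongr)

theorem gridInterval_subset_Ico_zero_one (k : Fin m) : gridInterval m k ⊆ Ico 0 1 := by
  have hm : (0 : ℝ) < m := Nat.cast_pos.2 k.pos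
  have hk : ((k : ℕ) : ℝ) + 1 ≤ m := by exact_mod_cast k.isLt
  exact Ico_subset_Ico (by positivity) ((div_le_one hm).2 hk)

theorem gridCubeP_eq_prod (c : GridIndex d m) :
    gridCubeP c = (univ.pi fun i => gridInterval m (c.1 i)) ×ˢ gridInterval m c.2 := by
  ext z
  simp only [gridCubeP, gridInterval, mem_ofPred_eq, mem_prod, mem_univ_pi, mem_Ico]

theorem measurableSet_gridCubeP (c : GridIndex d m) : MeasurableSet (gridCubeP c) := by
  rw [gridCubeP_eq_prod]
  exact (MeasurableSet.univ_pi fun i => measurableSet_gridInterval _).prod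
    (measurableSet_gridInterval _)

theorem isPreconnected_gridCubeP (c : GridIndex d m) : IsPreconnected (gridCubeP c) := by
  rw [gridCubeP_eq_prod]
  exact (isPreconnected_univ_pi fun _ => isPreconnected_Ico).prod isPreconnected_Ico

theorem volumeReal_gridCubeP (c : GridIndex d m) :
    volume.real (gridCubeP c) = ((m : ℝ) ^ (d + 1))⁻¹ := by
  simp [gridCubeP_eq_prod, volumeReal_univ_pi_prod, volumeReal_gridInterval, pow_succ, mul_comm]

theorem pairwise_disjoint_gridCubeP :
    Pairwise (Function.onFun Disjoint (gridCubeP : GridIndex d m → Set ((Fin d → ℝ) × ℝ))) := by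
  have le_of_mem {c c' : GridIndex d m} {z : (Fin d → ℝ) × ℝ} (hz : z ∈ gridCubeP c)
      (hz' : z ∈ gridCubeP c') : c ≤ c' :=
    ⟨fun i => le_of_div_le_of_lt_succ_div (hz.1 i).1 (hz'.1 i).2,
      le_of_div_le_of_lt_succ_div hz.2.1 hz'.2.2⟩
  intro c c' hne
  exact disjoint_left.2 fun z hz hz' => hne (le_antisymm (le_of_mem hz hz') (le_of_mem hz' hz))

theorem iUnion_gridCubeP (hm : 0 < m) :
    ⋃ c : GridIndex d m, gridCubeP c = (univ.pi fun _ => Ico (0 : ℝ) 1) ×ˢ Ico (0 : ℝ) 1 := by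
  refine Subset.antisymm (iUnion_subset fun c => ?_) fun z ⟨hz₁, hz₂⟩ => ?_
  · rw [gridCubeP_eq_prod]
    exact prod_mono (pi_mono fun i _ => gridInterval_subset_Ico_zero_one (c.1 i))
      (gridInterval_subset_Ico_zero_one c.2)
  · choose k hk using fun i => exists_mem_gridInterval hm (hz₁ i trivial)
    obtain ⟨l, hl⟩ := exists_mem_gridInterval hm hz₂
    exact mem_iUnion.2 ⟨(k, l), hk, hl⟩

theorem iUnion_gridCubeP_ae_eq_Icc (hm : 0 < m) :
    (⋃ c : GridIndex d m, gridCubeP c) =ᵐ[volume] Icc 0 1 := by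
  rw [iUnion_gridCubeP hm, Icc_prod_eq]
  exact Measure.set_prod_ae_eq Measure.univ_pi_Ico_ae_eq_Icc Ico_ae_eq_Icc

theorem sum_volumeReal_inter_gridCubeP (hm : 0 < m) {S : Set ((Fin d → ℝ) × ℝ)}
    (hS : MeasurableSet S) (hS₁ : S ⊆ Icc 0 1) :
    ∑ c : GridIndex d m, volume.real (gridCubeP c ∩ S) = volume.real S := by
  have hfin : volume S ≠ ⊤ := measure_ne_top_of_subset hS₁ isCompact_Icc.measure_ne_top
  rw [← measureReal_iUnion_fintype
    (fun c c' h => (pairwise_disjoint_gridCubeP h).mono inter_subset_left inter_subset_left)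
    (fun c => (measurableSet_gridCubeP c).inter hS)
    (fun c => measure_ne_top_of_subset inter_subset_right hfin), ← iUnion_inter]
  refine measureReal_congr ?_
  simpa only [inter_eq_right.2 hS₁] using
    (iUnion_gridCubeP_ae_eq_Icc hm).inter (Filter.EventuallyEq.refl _ S)

end Grid

section UndecidedCubes

variable {d m : ℕ} {A : Set ((Fin d → ℝ) × ℝ)}

open scoped Classical in
/-- The grid cubes that meet `A` without being contained in it. -/
noncomputable def boundaryCubes (m : ℕ) (A : Set ((Fin d → ℝ) × ℝ)) : Finset (GridIndex d m) :=
  {c | (gridCubeP c ∩ A).Nonempty ∧ ¬ gridCubeP c ⊆ A}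

open scoped Classical in
/-- The grid cubes inside `A` whose first `d` indices lie on the upper faces of the box
`∏ j, {0, …, k j}`. With `k j = ⌊t j * m⌋` these are the cubes inside `A` that the faces of the
anchored box `[0,t)` may cut. -/
noncomputable def faceCubes (m : ℕ) (A : Set ((Fin d → ℝ) × ℝ)) (k : Fin d → ℕ) :
    Finset (GridIndex d m) :=
  {c | gridCubeP c ⊆ A ∧ (∀ j, (c.1 j : ℕ) ≤ k j) ∧ ∃ i, (c.1 i : ℕ) = k i}

theorem mem_boundaryCubes {c : GridIndex d m} :
    c ∈ boundaryCubes m A ↔ (gridCubeP c ∩ A).Nonempty ∧ ¬ gridCubeP c ⊆ A := by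
  simp only [boundaryCubes, Finset.mem_filter_univ]

theorem mem_faceCubes {k : Fin d → ℕ} {c : GridIndex d m} :
    c ∈ faceCubes m A k ↔
      gridCubeP c ⊆ A ∧ (∀ j, (c.1 j : ℕ) ≤ k j) ∧ ∃ i, (c.1 i : ℕ) = k i := by
  simp only [faceCubes, Finset.mem_filter_univ]

theorem gridCubeP_subset_euclNbhdP_frontier {c : GridIndex d m} (hc : c ∈ boundaryCubes m A) :
    gridCubeP c ⊆ euclNbhdP (frontier A) (√(d + 1) * (m : ℝ)⁻¹) := by
  obtain ⟨hmeet, hnot⟩ := mem_boundaryCubes.1 hc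
  obtain ⟨p, hp, hpA⟩ := inter_frontier_nonempty_of_isPreconnected (isPreconnected_gridCubeP c)
    (hmeet.mono (inter_subset_inter_right _ subset_closure)) (inter_compl_nonempty_iff.2 hnot)
  exact fun z hz => mem_euclNbhdP_of_abs_sub_le (by positivity) hpA
    (fun j => abs_sub_le_of_mem_gridInterval (hz.1 j) (hp.1 j))
    (abs_sub_le_of_mem_gridInterval hz.2 hp.2)

/-- The layer of thickness `1/m` just below the base of the unit cube. -/
def baseLayer (d m : ℕ) : Set ((Fin d → ℝ) × ℝ) :=
  (univ.pi fun _ => Ico 0 1) ×ˢ Ico (-(m : ℝ)⁻¹) 0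

theorem measurableSet_baseLayer : MeasurableSet (baseLayer d m) :=
  (MeasurableSet.univ_pi fun _ => measurableSet_Ico).prod measurableSet_Ico

theorem volumeReal_baseLayer : volume.real (baseLayer d m) = (m : ℝ)⁻¹ := by
  simp [baseLayer, volumeReal_univ_pi_prod]

theorem mem_frontier_of_mem_base (hA : A ⊆ Icc 0 1) {x : Fin d → ℝ} (hx : (x, (0 : ℝ)) ∈ A) :
    (x, (0 : ℝ)) ∈ frontier A := by
  rw [frontier_eq_closure_inter_closure]
  refine ⟨subset_closure hx, map_mem_closure (f := fun τ : ℝ => (x, τ)) (by fun_prop)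
    (s := Iio 0) (by simp) fun τ hτ hmem => ?_⟩
  exact not_le.2 hτ (hA hmem).1.2

theorem baseLayer_subset_euclNbhdP_frontier (hA : A ⊆ Icc 0 1)
    (hbase : ∀ x ∈ Icc (0 : Fin d → ℝ) 1, (x, (0 : ℝ)) ∈ A) :
    baseLayer d m ⊆ euclNbhdP (frontier A) (√(d + 1) * (m : ℝ)⁻¹) := by
  rintro z ⟨hz₁, hz₂⟩
  have hx : z.1 ∈ Icc (0 : Fin d → ℝ) 1 :=
    ⟨fun i => (hz₁ i trivial).1, fun i => (hz₁ i trivial).2.le⟩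
  refine mem_euclNbhdP_of_abs_sub_le (by positivity) (mem_frontier_of_mem_base hA (hbase _ hx))
    (fun j => by simp) ?_
  rw [sub_zero, abs_of_neg hz₂.2]
  linarith [hz₂.1]

theorem card_boundaryCubes_add_le (hm : 0 < m) (hA : A ⊆ Icc 0 1)
    (hbase : ∀ x ∈ Icc (0 : Fin d → ℝ) 1, (x, (0 : ℝ)) ∈ A) :
    ((boundaryCubes m A).card : ℝ) + (m : ℝ) ^ d ≤
      (m : ℝ) ^ (d + 1) * volume.real (euclNbhdP (frontier A) (√(d + 1) * (m : ℝ)⁻¹)) := by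
  set E := euclNbhdP (frontier A) (√(d + 1) * (m : ℝ)⁻¹)
  have hE : volume E ≠ ⊤ := volume_euclNbhdP_frontier_ne_top hA _
  have hbelow (c : GridIndex d m) : Disjoint (gridCubeP c) (baseLayer d m) :=
    disjoint_left.2 fun z hz hzb =>
      hzb.2.2.not_ge ((by positivity : (0 : ℝ) ≤ c.2 / m).trans hz.2.1)
  have hpack := card_mul_le_measureReal_of_pairwise_disjoint (μ := volume) (E := E \ baseLayer d m)
    (D := fun c : boundaryCubes m A => gridCubeP c.1)
    (measure_ne_top_of_subset sdiff_subset hE) (fun c => measurableSet_gridCubeP c.1)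
    (pairwise_disjoint_gridCubeP.comp_of_injective Subtype.val_injective)
    (fun c => (volumeReal_gridCubeP c.1).ge)
    fun c => subset_sdiff.2 ⟨gridCubeP_subset_euclNbhdP_frontier c.2, hbelow c.1⟩
  rw [Fintype.card_coe, measureReal_sdiff (baseLayer_subset_euclNbhdP_frontier hA hbase)
    measurableSet_baseLayer hE, volumeReal_baseLayer, le_sub_iff_add_le] at hpack
  calc ((boundaryCubes m A).card : ℝ) + (m : ℝ) ^ d
      = (m : ℝ) ^ (d + 1) *
          ((boundaryCubes m A).card * ((m : ℝ) ^ (d + 1))⁻¹ + (m : ℝ)⁻¹) := by field_simp; ring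
    _ ≤ (m : ℝ) ^ (d + 1) * volume.real E := by gcongr

/-- The grid cube `Q_c` with its `i`-th side replaced by the interval of length `2/m` centred
at `τ`. -/
def tube (c : GridIndex d m) (i : Fin d) (τ : ℝ) : Set ((Fin d → ℝ) × ℝ) :=
  (univ.pi (Function.update (fun j => gridInterval m (c.1 j)) i
    (Ico (τ - (m : ℝ)⁻¹) (τ + (m : ℝ)⁻¹)))) ×ˢ gridInterval m c.2

theorem mem_tube_iff {c : GridIndex d m} {i : Fin d} {τ : ℝ} {z : (Fin d → ℝ) × ℝ} :
    z ∈ tube c i τ ↔ z.1 i ∈ Ico (τ - (m : ℝ)⁻¹) (τ + (m : ℝ)⁻¹) ∧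
      (∀ j ≠ i, z.1 j ∈ gridInterval m (c.1 j)) ∧ z.2 ∈ gridInterval m c.2 := by
  rw [tube, mem_prod, mem_univ_pi,
    Function.forall_update_iff _ (p := fun j (s : Set ℝ) => z.1 j ∈ s), and_assoc]

theorem measurableSet_tube (c : GridIndex d m) (i : Fin d) (τ : ℝ) :
    MeasurableSet (tube c i τ) := by
  refine (MeasurableSet.univ_pi ?_).prod (measurableSet_gridInterval _)
  exact (Function.forall_update_iff _ (p := fun _ (s : Set ℝ) => MeasurableSet s)).2
    ⟨measurableSet_Ico, fun j _ => measurableSet_gridInterval _⟩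

theorem volumeReal_tube (c : GridIndex d m) (i : Fin d) (τ : ℝ) :
    volume.real (tube c i τ) = 2 * ((m : ℝ) ^ (d + 1))⁻¹ := by
  have hside (j : Fin d) : volume.real (Function.update (fun j => gridInterval m (c.1 j)) i
      (Ico (τ - (m : ℝ)⁻¹) (τ + (m : ℝ)⁻¹)) j) =
      Function.update (fun _ => (m : ℝ)⁻¹) i (2 * (m : ℝ)⁻¹) j := by
    rcases eq_or_ne j i with rfl | hj
    · rw [Function.update_self, Function.update_self, Real.volume_real_Ico_of_le]
      · ring
      · linarith [(by positivity : (0 : ℝ) ≤ (m : ℝ)⁻¹)]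
    · rw [Function.update_of_ne hj, Function.update_of_ne hj, volumeReal_gridInterval]
  rw [tube, volumeReal_univ_pi_prod, Finset.prod_congr rfl fun j _ => hside j,
    Finset.prod_update_of_mem (Finset.mem_univ i), Finset.prod_const, volumeReal_gridInterval,
    mul_assoc, mul_assoc, ← pow_succ, ← pow_succ', ← inv_pow]
  congr 2
  simp [Finset.card_sdiff, Nat.sub_add_cancel i.pos]

theorem exists_tube_subset_euclNbhdP_frontier (hm : 0 < m) (hA : A ⊆ Icc 0 1) {c : GridIndex d m}
    (hc : gridCubeP c ⊆ A) (i : Fin d) :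
    ∃ τ : ℝ, ((c.1 i : ℝ) + 1) / m ≤ τ ∧
      tube c i τ ⊆ euclNbhdP (frontier A) (√(d + 1) * (m : ℝ)⁻¹) := by
  have hm' : (0 : ℝ) < m := Nat.cast_pos.2 hm
  let corner : Fin d → ℝ := fun j => (c.1 j : ℝ) / m
  let ray : ℝ → (Fin d → ℝ) × ℝ := fun τ => (Function.update corner i τ, (c.2 : ℝ) / m)
  have hcorner (k : ℕ) : (k : ℝ) / m ∈ gridInterval m k :=
    mem_gridInterval_iff.2 ⟨le_rfl, by linarith [inv_pos.2 hm']⟩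
  have hray : MapsTo ray (gridInterval m (c.1 i)) A := fun τ hτ => hc
    ⟨(Function.forall_update_iff _ (p := fun j x => x ∈ gridInterval m (c.1 j))).2
      ⟨hτ, fun j _ => hcorner _⟩, hcorner _⟩
  have hexit : ray 2 ∉ A := fun h => by
    have h₂ := (hA h).2.1 i
    norm_num [ray] at h₂
  have hlt : ((c.1 i : ℝ) + 1) / m ≤ 1 := by
    rw [div_le_one hm']
    exact_mod_cast (c.1 i).isLt
  obtain ⟨τ, hτ, hτA⟩ := exists_ge_mem_frontier_of_mapsTo_Ico (f := ray) (by fun_prop)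
    (by gcongr; linarith) (by linarith) hray hexit
  refine ⟨τ, hτ, fun z hz => ?_⟩
  obtain ⟨hzi, hzj, hz₂⟩ := mem_tube_iff.1 hz
  refine mem_euclNbhdP_of_abs_sub_le (by positivity) hτA (fun j => ?_)
    (abs_sub_le_of_mem_gridInterval hz₂ (hcorner _))
  rcases eq_or_ne j i with rfl | hj
  · simp only [ray, Function.update_self]
    exact abs_le.2 ⟨by linarith [hzi.1], by linarith [hzi.2]⟩
  · simp only [ray, Function.update_of_ne hj]
    exact abs_sub_le_of_mem_gridInterval (hzj j hj) (hcorner _)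

theorem le_of_mem_tube_of_mem_tube {c c' : GridIndex d m} {i i' : Fin d} {τ τ' : ℝ}
    {z : (Fin d → ℝ) × ℝ} (hz : z ∈ tube c i τ) (hz' : z ∈ tube c' i' τ')
    (hτ : ((c.1 i : ℝ) + 1) / m ≤ τ) (hi' : c.1 i' ≤ c'.1 i') : c ≤ c' := by
  obtain ⟨hzi, hzj, hz₂⟩ := mem_tube_iff.1 hz
  obtain ⟨-, hzj', hz₂'⟩ := mem_tube_iff.1 hz'
  have hlower (j : Fin d) : (c.1 j : ℝ) / m ≤ z.1 j := by
    rcases eq_or_ne j i with rfl | hj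
    · rw [add_div, one_div] at hτ
      linarith [hzi.1]
    · exact (hzj j hj).1
  refine ⟨fun j => ?_, le_of_div_le_of_lt_succ_div hz₂.1 hz₂'.2⟩
  rcases eq_or_ne j i' with rfl | hj
  · exact hi'
  · exact le_of_div_le_of_lt_succ_div (hlower j) (hzj' j hj).2

theorem two_mul_card_faceCubes_le (hm : 0 < m) (hA : A ⊆ Icc 0 1) (k : Fin d → ℕ) :
    2 * ((faceCubes m A k).card : ℝ) ≤
      (m : ℝ) ^ (d + 1) * volume.real (euclNbhdP (frontier A) (√(d + 1) * (m : ℝ)⁻¹)) := by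
  set E := euclNbhdP (frontier A) (√(d + 1) * (m : ℝ)⁻¹)
  have hmem (c : faceCubes m A k) := mem_faceCubes.1 c.2
  choose i hi using fun c => (hmem c).2.2
  choose τ hτ hsub using fun c : faceCubes m A k =>
    exists_tube_subset_euclNbhdP_frontier hm hA (hmem c).1 (i c)
  have le_of_mem {c c' : faceCubes m A k} {z : (Fin d → ℝ) × ℝ}
      (hz : z ∈ tube c.1 (i c) (τ c)) (hz' : z ∈ tube c'.1 (i c') (τ c')) : c.1 ≤ c'.1 :=
    le_of_mem_tube_of_mem_tube hz hz' (hτ c) (((hmem c).2.1 _).trans (hi c').ge)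
  have hdisj : Pairwise (Function.onFun Disjoint
      fun c : faceCubes m A k => tube c.1 (i c) (τ c)) := fun c c' hne =>
    disjoint_left.2 fun z hz hz' =>
      hne (Subtype.ext (le_antisymm (le_of_mem hz hz') (le_of_mem hz' hz)))
  have hpack := card_mul_le_measureReal_of_pairwise_disjoint (μ := volume) (E := E)
    (D := fun c : faceCubes m A k => tube c.1 (i c) (τ c))
    (volume_euclNbhdP_frontier_ne_top hA _) (fun c => measurableSet_tube c.1 (i c) (τ c)) hdisj
    (fun c => (volumeReal_tube c.1 (i c) (τ c)).ge) hsub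
  rw [Fintype.card_coe] at hpack
  calc 2 * ((faceCubes m A k).card : ℝ)
      = (m : ℝ) ^ (d + 1) *
          ((faceCubes m A k).card * (2 * ((m : ℝ) ^ (d + 1))⁻¹)) := by field_simp
    _ ≤ (m : ℝ) ^ (d + 1) * volume.real E := by gcongr

theorem card_boundaryCubes_union_faceCubes_le (hm : 0 < m) (hA : A ⊆ Icc 0 1)
    (hbase : ∀ x ∈ Icc (0 : Fin d → ℝ) 1, (x, (0 : ℝ)) ∈ A) (k : Fin d → ℕ) :
    ((boundaryCubes m A ∪ faceCubes m A k).card : ℝ) ≤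
      3 / 2 * (m : ℝ) ^ (d + 1) * volume.real (euclNbhdP (frontier A) (√(d + 1) * (m : ℝ)⁻¹))
        - (m : ℝ) ^ d := by
  have hunion : ((boundaryCubes m A ∪ faceCubes m A k).card : ℝ) ≤
      (boundaryCubes m A).card + (faceCubes m A k).card := by
    exact_mod_cast Finset.card_union_le _ _
  linarith [card_boundaryCubes_add_le hm hA hbase, two_mul_card_faceCubes_le hm hA k]

theorem eventually_volumeReal_euclNbhdP_frontier_le {M : ℝ} (hM : HasMinkowskiContentP A M) :
    ∀ᶠ m : ℕ in atTop, 3 / 2 * (m : ℝ) ^ (d + 1) *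
      volume.real (euclNbhdP (frontier A) (√(d + 1) * (m : ℝ)⁻¹)) - (m : ℝ) ^ d ≤
        3 * √(d + 1) * M * (m : ℝ) ^ d := by
  set r := √((d : ℝ) + 1)
  have hr₀ : 0 < r := Real.sqrt_pos.2 (by positivity)
  have hε : Tendsto (fun m : ℕ => r * (m : ℝ)⁻¹) atTop (nhdsWithin 0 (Ioi 0)) := by
    refine tendsto_nhdsWithin_iff.2 ⟨?_, ?_⟩
    · simpa only [mul_zero] using tendsto_inv_atTop_nhds_zero_nat.const_mul r
    · filter_upwards [eventually_gt_atTop 0] with m hm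
      exact mem_Ioi.2 (by positivity)
  have hgap : M < M + (3 * r)⁻¹ := lt_add_of_pos_right M (by positivity)
  filter_upwards [(hM.comp hε).eventually_lt_const hgap, eventually_gt_atTop 0] with m hlt hm
  have hm' : (0 : ℝ) < m := Nat.cast_pos.2 hm
  rw [Function.comp, div_lt_iff₀ (by positivity), ← measureReal_def] at hlt
  calc 3 / 2 * (m : ℝ) ^ (d + 1) * volume.real (euclNbhdP (frontier A) (r * (m : ℝ)⁻¹))
        - (m : ℝ) ^ d
      ≤ 3 / 2 * (m : ℝ) ^ (d + 1) * ((M + (3 * r)⁻¹) * (2 * (r * (m : ℝ)⁻¹))) - (m : ℝ) ^ d := by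
        gcongr
    _ = 3 * r * M * (m : ℝ) ^ d := by
        field_simp
        ring

end UndecidedCubes

section IndependentSum

theorem abs_rpow_le_rpow_sub_two_mul_sq {x K q : ℝ} (hx : |x| ≤ K) (hq : 2 ≤ q) :
    |x| ^ q ≤ K ^ (q - 2) * x ^ 2 :=
  calc |x| ^ q = |x| ^ (q - 2) * x ^ 2 := by
        rw [← sq_abs, ← Real.rpow_two, ← Real.rpow_add_of_nonneg (abs_nonneg x) (by linarith)
          zero_le_two, sub_add_cancel]
    _ ≤ K ^ (q - 2) * x ^ 2 := by gcongr

theorem ae_eq_integral_of_ae_eq_const {α : Type*} [MeasurableSpace α] {μ : Measure α}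
    [IsProbabilityMeasure μ] {g : α → ℝ} {v : ℝ} (h : g =ᵐ[μ] fun _ => v) :
    g =ᵐ[μ] fun _ => ∫ x, g x ∂μ := by
  simpa [integral_congr_ae h] using h

theorem ae_abs_sub_integral_le {α : Type*} [MeasurableSpace α] {μ : Measure α}
    [IsProbabilityMeasure μ] {g : α → ℝ} (hg : AEMeasurable g μ) {a b : ℝ}
    (hab : ∀ᵐ x ∂μ, g x ∈ Icc a b) : ∀ᵐ x ∂μ, |g x - ∫ y, g y ∂μ| ≤ b - a := by
  have hmean : ∫ y, g y ∂μ ∈ Icc a b :=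
    (convex_Icc a b).integral_mem isClosed_Icc hab (Integrable.of_mem_Icc a b hg hab)
  filter_upwards [hab] with x hx using abs_sub_le_of_le_of_le hx.1 hx.2 hmean.1 hmean.2

variable {ι : Type*} [Fintype ι] {Ω : ι → Type*} [∀ i, MeasurableSpace (Ω i)]
  {μ : ∀ i, Measure (Ω i)} [∀ i, IsProbabilityMeasure (μ i)] {f : ∀ i, Ω i → ℝ} {a : ι → ℝ}
  {s : Finset ι}

theorem ae_abs_sum_le_card (hf : ∀ i, AEMeasurable (f i) (μ i))
    (ha : ∀ i, ∀ᵐ x ∂μ i, f i x ∈ Icc (a i) (a i + 1)) (hsum : ∑ i, ∫ x, f i x ∂μ i = 0)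
    (hs : ∀ i ∉ s, f i =ᵐ[μ i] fun _ => ∫ x, f i x ∂μ i) :
    ∀ᵐ ω ∂Measure.pi μ, |∑ i, f i (ω i)| ≤ s.card := by
  have hdev (i : ι) :
      ∀ᵐ x ∂μ i, |f i x - ∫ y, f i y ∂μ i| ≤ 1 ∧ (i ∉ s → f i x - ∫ y, f i y ∂μ i = 0) := by
    refine .and (by simpa using ae_abs_sub_integral_le (hf i) (ha i)) ?_
    by_cases hi : i ∈ s
    · simp [hi]
    · filter_upwards [hs i hi] with x hx _ using sub_eq_zero.2 hx
  have hpi : ∀ᵐ ω ∂Measure.pi μ, ∀ i, |f i (ω i) - ∫ y, f i y ∂μ i| ≤ 1 ∧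
      (i ∉ s → f i (ω i) - ∫ y, f i y ∂μ i = 0) :=
    ae_all_iff.2 fun i => (measurePreserving_eval μ i).quasiMeasurePreserving.ae (hdev i)
  filter_upwards [hpi] with ω hω
  calc |∑ i, f i (ω i)| = |∑ i, (f i (ω i) - ∫ y, f i y ∂μ i)| := by
        rw [Finset.sum_sub_distrib, hsum, sub_zero]
    _ = |∑ i ∈ s, (f i (ω i) - ∫ y, f i y ∂μ i)| := by
        rw [Finset.sum_subset (Finset.subset_univ s) fun i _ hi => (hω i).2 hi]
    _ ≤ ∑ i ∈ s, |f i (ω i) - ∫ y, f i y ∂μ i| := Finset.abs_sum_le_sum_abs _ _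
    _ ≤ ∑ _i ∈ s, 1 := Finset.sum_le_sum fun i _ => (hω i).1
    _ = s.card := by simp

theorem integral_sq_sum_le_card (hf : ∀ i, AEMeasurable (f i) (μ i))
    (ha : ∀ i, ∀ᵐ x ∂μ i, f i x ∈ Icc (a i) (a i + 1)) (hsum : ∑ i, ∫ x, f i x ∂μ i = 0)
    (hs : ∀ i ∉ s, f i =ᵐ[μ i] fun _ => ∫ x, f i x ∂μ i) :
    ∫ ω, (∑ i, f i (ω i)) ^ 2 ∂Measure.pi μ ≤ s.card := by
  have hfi (i : ι) : Integrable (f i) (μ i) := .of_mem_Icc _ _ (hf i) (ha i)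
  have hfpi (i : ι) : Integrable (fun ω : ∀ i, Ω i => f i (ω i)) (Measure.pi μ) :=
    integrable_comp_eval (hfi i)
  have hvar_le (i : ι) : ProbabilityTheory.variance (f i) (μ i) ≤ 1 := by
    refine (ProbabilityTheory.variance_le_sq_of_bounded (ha i) (hf i)).trans ?_
    norm_num
  have hvar_zero (i : ι) (hi : i ∉ s) : ProbabilityTheory.variance (f i) (μ i) = 0 := by
    rw [ProbabilityTheory.variance_eq_integral (hf i)]
    refine integral_eq_zero_of_ae ?_
    filter_upwards [hs i hi] with x hx
    simp [hx]
  have hmean : ∫ ω, (∑ i, fun ω : ∀ i, Ω i => f i (ω i)) ω ∂Measure.pi μ = 0 := by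
    simp_rw [Finset.sum_apply]
    rw [integral_finsetSum _ fun i _ => hfpi i, ← hsum]
    exact Finset.sum_congr rfl fun i _ => integral_comp_eval (hfi i).aestronglyMeasurable
  calc ∫ ω, (∑ i, f i (ω i)) ^ 2 ∂Measure.pi μ
      = ProbabilityTheory.variance (∑ i, fun ω : ∀ i, Ω i => f i (ω i)) (Measure.pi μ) := by
        rw [ProbabilityTheory.variance_of_integral_eq_zero
          (Finset.aemeasurable_sum _ fun i _ => (hfpi i).aemeasurable) hmean]
        simp_rw [Finset.sum_apply]
    _ = ∑ i, ProbabilityTheory.variance (f i) (μ i) :=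
        ProbabilityTheory.variance_sum_pi fun i =>
          memLp_of_bounded (ha i) (hf i).aestronglyMeasurable 2
    _ = ∑ i ∈ s, ProbabilityTheory.variance (f i) (μ i) :=
        (Finset.sum_subset (Finset.subset_univ s) fun i _ hi => hvar_zero i hi).symm
    _ ≤ ∑ _i ∈ s, 1 := Finset.sum_le_sum fun i _ => hvar_le i
    _ = s.card := by simp

theorem integral_abs_sum_rpow_le (hf : ∀ i, AEMeasurable (f i) (μ i))
    (ha : ∀ i, ∀ᵐ x ∂μ i, f i x ∈ Icc (a i) (a i + 1)) (hsum : ∑ i, ∫ x, f i x ∂μ i = 0)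
    (hs : ∀ i ∉ s, f i =ᵐ[μ i] fun _ => ∫ x, f i x ∂μ i) {q : ℝ} (hq : 2 ≤ q) :
    ∫ ω, |∑ i, f i (ω i)| ^ q ∂Measure.pi μ ≤ (s.card : ℝ) ^ (q - 1) := by
  have hbound := ae_abs_sum_le_card hf ha hsum hs
  have hmeas : AEMeasurable (fun ω : ∀ i, Ω i => ∑ i, f i (ω i)) (Measure.pi μ) :=
    Finset.aemeasurable_fun_sum _ fun i _ =>
      (hf i).comp_quasiMeasurePreserving (measurePreserving_eval μ i).quasiMeasurePreserving
  have hsq : Integrable (fun ω => (∑ i, f i (ω i)) ^ 2) (Measure.pi μ) :=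
    (memLp_of_bounded (hbound.mono fun ω => abs_le.1) hmeas.aestronglyMeasurable 2).integrable_sq
  calc ∫ ω, |∑ i, f i (ω i)| ^ q ∂Measure.pi μ
      ≤ ∫ ω, (s.card : ℝ) ^ (q - 2) * (∑ i, f i (ω i)) ^ 2 ∂Measure.pi μ :=
        integral_mono_of_nonneg (.of_forall fun ω => by positivity) (hsq.const_mul _)
          (hbound.mono fun ω hω => abs_rpow_le_rpow_sub_two_mul_sq hω hq)
    _ = (s.card : ℝ) ^ (q - 2) * ∫ ω, (∑ i, f i (ω i)) ^ 2 ∂Measure.pi μ := integral_const_mul _ _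
    _ ≤ (s.card : ℝ) ^ (q - 2) * s.card := by
        gcongr
        exact integral_sq_sum_le_card hf ha hsum hs
    _ = (s.card : ℝ) ^ (q - 1) := by
        rw [← Real.rpow_add_one' (by positivity) (by linarith)]
        ring_nf

end IndependentSum

section LocalDiscrepancy

variable {d m : ℕ} {A : Set ((Fin d → ℝ) × ℝ)} {t : Fin d → ℝ}

theorem stratifiedMeasure_eq_pi_cond :
    stratifiedMeasure d m =
      Measure.pi fun c : GridIndex d m => ProbabilityTheory.cond volume (gridCubeP c) := rfl

theorem isProbabilityMeasure_cond_gridCubeP (c : GridIndex d m) :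
    IsProbabilityMeasure (ProbabilityTheory.cond volume (gridCubeP c)) := by
  have hpos : 0 < volume.real (gridCubeP c) := by
    have hm : (0 : ℝ) < m := Nat.cast_pos.2 c.2.pos
    rw [volumeReal_gridCubeP]
    positivity
  obtain ⟨h₀, h₁⟩ := ENNReal.toReal_pos_iff.1 hpos
  exact ProbabilityTheory.cond_isProbabilityMeasure_of_finite h₀.ne' h₁.ne

theorem isProbabilityMeasure_stratifiedMeasure : IsProbabilityMeasure (stratifiedMeasure d m) := by
  have := isProbabilityMeasure_cond_gridCubeP (d := d) (m := m)
  rw [stratifiedMeasure_eq_pi_cond]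
  infer_instance

theorem sum_integral_indicator_cond_gridCubeP (hm : 0 < m) {S : Set ((Fin d → ℝ) × ℝ)}
    (hS : MeasurableSet S) (hS₁ : S ⊆ Icc 0 1) :
    ∑ c : GridIndex d m, ∫ z, S.indicator (fun _ => (1 : ℝ)) z
      ∂ProbabilityTheory.cond volume (gridCubeP c) = (m : ℝ) ^ (d + 1) * volume.real S := by
  have hcube (c : GridIndex d m) : ∫ z, S.indicator (fun _ => (1 : ℝ)) z
      ∂ProbabilityTheory.cond volume (gridCubeP c) =
        (m : ℝ) ^ (d + 1) * volume.real (gridCubeP c ∩ S) := by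
    rw [integral_indicator_const _ hS, smul_eq_mul, mul_one, measureReal_def,
      ProbabilityTheory.cond_apply (measurableSet_gridCubeP c), ENNReal.toReal_mul,
      ENNReal.toReal_inv, ← measureReal_def, ← measureReal_def, volumeReal_gridCubeP, inv_inv]
  simp_rw [hcube, ← Finset.mul_sum, sum_volumeReal_inter_gridCubeP hm hS hS₁]

theorem lowerBox_subset_Icc (ht : t ∈ Icc 0 1) : lowerBox t ⊆ Icc 0 1 := fun _ hy =>
  ⟨fun i => (hy i).1, fun i => (hy i).2.le.trans (ht.2 i)⟩

theorem measurableSet_setOf_mem_lowerBox :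
    MeasurableSet {p : (Fin d → ℝ) × (Fin d → ℝ) | p.2 ∈ lowerBox p.1} := by
  simp only [lowerBox, mem_ofPred_eq]
  measurability

theorem measurableSet_lowerBox : MeasurableSet (lowerBox t) :=
  measurable_prodMk_left measurableSet_setOf_mem_lowerBox

/-- The part of `A` above the anchored box `[0,t)`; for `A = graphRegion ψ L` this is
`Jstar ψ L t`. -/
def boxSlice (A : Set ((Fin d → ℝ) × ℝ)) (t : Fin d → ℝ) : Set ((Fin d → ℝ) × ℝ) :=
  (lowerBox t ×ˢ Icc 0 1) ∩ A

theorem boxSlice_subset : boxSlice A t ⊆ A := inter_subset_right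

theorem measurableSet_setOf_mem_boxSlice (hA : MeasurableSet A) :
    MeasurableSet {p : (Fin d → ℝ) × ((Fin d → ℝ) × ℝ) | p.2 ∈ boxSlice A p.1} :=
  .inter (.inter
    ((measurable_fst.prodMk (measurable_fst.comp measurable_snd)) measurableSet_setOf_mem_lowerBox)
    ((measurable_snd.comp measurable_snd) measurableSet_Icc)) (measurable_snd hA)

theorem measurableSet_boxSlice (hA : MeasurableSet A) : MeasurableSet (boxSlice A t) :=
  measurable_prodMk_left (measurableSet_setOf_mem_boxSlice hA)

/-- The proportion of the volume of `A` that lies above the anchored box `[0,t)`. -/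
noncomputable def boxFraction (A : Set ((Fin d → ℝ) × ℝ)) (t : Fin d → ℝ) : ℝ :=
  volume.real (boxSlice A t) / volume.real A

theorem boxFraction_nonneg : 0 ≤ boxFraction A t := div_nonneg measureReal_nonneg measureReal_nonneg

theorem volumeReal_boxSlice_le (hA₁ : A ⊆ Icc 0 1) :
    volume.real (boxSlice A t) ≤ volume.real A :=
  measureReal_mono boxSlice_subset (measure_ne_top_of_subset hA₁ isCompact_Icc.measure_ne_top)

theorem boxFraction_le_one (hA₁ : A ⊆ Icc 0 1) : boxFraction A t ≤ 1 :=
  div_le_one_of_le₀ (volumeReal_boxSlice_le hA₁) measureReal_nonneg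

theorem boxFraction_mul_volumeReal (hA₁ : A ⊆ Icc 0 1) :
    boxFraction A t * volume.real A = volume.real (boxSlice A t) :=
  div_mul_cancel_of_imp fun h =>
    le_antisymm ((volumeReal_boxSlice_le hA₁).trans h.le) measureReal_nonneg

theorem measurable_boxFraction (hA : MeasurableSet A) : Measurable (boxFraction A) :=
  (measurable_measure_prodMk_left (measurableSet_setOf_mem_boxSlice hA)).ennreal_toReal.div_const _

/-- The contribution of a sample point `z` to the local discrepancy of `A` at `t`: its contribution
to the count of points in `boxSlice A t`, minus the share of it expected from a point of `A`. -/
noncomputable def sliceDeviation (A : Set ((Fin d → ℝ) × ℝ)) (t : Fin d → ℝ)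
    (z : (Fin d → ℝ) × ℝ) : ℝ :=
  (boxSlice A t).indicator (fun _ => 1) z - boxFraction A t * A.indicator (fun _ => 1) z

theorem sliceDeviation_of_mem_boxSlice {z : (Fin d → ℝ) × ℝ} (hz : z ∈ boxSlice A t) :
    sliceDeviation A t z = 1 - boxFraction A t := by
  simp [sliceDeviation, hz, boxSlice_subset hz]

theorem sliceDeviation_of_notMem_boxSlice {z : (Fin d → ℝ) × ℝ} (hz : z ∉ boxSlice A t)
    (hzA : z ∈ A) : sliceDeviation A t z = -boxFraction A t := by
  simp [sliceDeviation, hz, hzA]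

theorem sliceDeviation_of_notMem {z : (Fin d → ℝ) × ℝ} (hzA : z ∉ A) :
    sliceDeviation A t z = 0 := by
  simp [sliceDeviation, hzA, notMem_subset boxSlice_subset hzA]

theorem sliceDeviation_mem_Icc (hA₁ : A ⊆ Icc 0 1) (z : (Fin d → ℝ) × ℝ) :
    sliceDeviation A t z ∈ Icc (-boxFraction A t) (-boxFraction A t + 1) := by
  have h₀ : 0 ≤ boxFraction A t := boxFraction_nonneg
  have h₁ : boxFraction A t ≤ 1 := boxFraction_le_one hA₁
  by_cases hzA : z ∈ A
  · by_cases hz : z ∈ boxSlice A t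
    · rw [sliceDeviation_of_mem_boxSlice hz]
      constructor <;> linarith
    · rw [sliceDeviation_of_notMem_boxSlice hz hzA]
      constructor <;> linarith
  · rw [sliceDeviation_of_notMem hzA]
    constructor <;> linarith

theorem measurable_uncurry_sliceDeviation (hA : MeasurableSet A) :
    Measurable (Function.uncurry (sliceDeviation A)) :=
  (measurable_const.indicator (measurableSet_setOf_mem_boxSlice hA)).sub
    (((measurable_boxFraction hA).comp measurable_fst).mul
      ((measurable_const.indicator hA).comp measurable_snd))

theorem measurable_sliceDeviation (hA : MeasurableSet A) : Measurable (sliceDeviation A t) :=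
  (measurable_uncurry_sliceDeviation hA).of_uncurry_left

theorem sum_integral_sliceDeviation_eq_zero (hm : 0 < m) (hA : MeasurableSet A)
    (hA₁ : A ⊆ Icc 0 1) :
    ∑ c : GridIndex d m, ∫ z, sliceDeviation A t z
      ∂ProbabilityTheory.cond volume (gridCubeP c) = 0 := by
  have := isProbabilityMeasure_cond_gridCubeP (d := d) (m := m)
  have hslice : MeasurableSet (boxSlice A t) := measurableSet_boxSlice hA
  have hsplit (c : GridIndex d m) := integral_sub
    (μ := ProbabilityTheory.cond volume (gridCubeP c))
    ((integrable_const (1 : ℝ)).indicator hslice)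
    (((integrable_const (1 : ℝ)).indicator hA).const_mul (boxFraction A t))
  simp_rw [sliceDeviation, hsplit, integral_const_mul, Finset.sum_sub_distrib, ← Finset.mul_sum]
  rw [sum_integral_indicator_cond_gridCubeP hm hslice (boxSlice_subset.trans hA₁),
    sum_integral_indicator_cond_gridCubeP hm hA hA₁, mul_left_comm,
    boxFraction_mul_volumeReal hA₁, sub_self]

theorem gridCubeP_subset_or_disjoint_boxSlice (hA₁ : A ⊆ Icc 0 1) (ht : 0 ≤ t) {c : GridIndex d m}
    (hcA : gridCubeP c ⊆ A) (hc : c ∉ faceCubes m A fun j => ⌊t j * m⌋₊) :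
    gridCubeP c ⊆ boxSlice A t ∨ Disjoint (gridCubeP c) (boxSlice A t) := by
  have hm : (0 : ℝ) < m := Nat.cast_pos.2 c.2.pos
  have htm (j : Fin d) : 0 ≤ t j * m := mul_nonneg (ht j) hm.le
  by_cases hle : ∀ j, (c.1 j : ℕ) ≤ ⌊t j * m⌋₊
  · left
    have hlt (j : Fin d) : (c.1 j : ℕ) < ⌊t j * m⌋₊ :=
      (hle j).lt_of_ne fun heq => hc (mem_faceCubes.2 ⟨hcA, hle, j, heq⟩)
    refine fun z hz => ⟨⟨fun j => ⟨(hA₁ (hcA hz)).1.1 j, ?_⟩, ?_⟩, hcA hz⟩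
    · calc z.1 j < ((c.1 j : ℕ) + 1 : ℝ) / m := (hz.1 j).2
        _ ≤ (⌊t j * m⌋₊ : ℝ) / m := by
            gcongr
            exact_mod_cast hlt j
        _ ≤ t j := (div_le_iff₀ hm).2 (Nat.floor_le (htm j))
    · exact ⟨(hA₁ (hcA hz)).1.2, (hA₁ (hcA hz)).2.2⟩
  · right
    push Not at hle
    obtain ⟨j, hj⟩ := hle
    refine disjoint_left.2 fun z hz hzt => (hzt.1.1 j).2.not_ge ?_
    exact ((le_div_iff₀ hm).2 ((Nat.floor_lt (htm j)).1 hj).le).trans (hz.1 j).1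

theorem exists_sliceDeviation_eq_on_gridCubeP (hA₁ : A ⊆ Icc 0 1) (ht : 0 ≤ t) {c : GridIndex d m}
    (hc : c ∉ boundaryCubes m A ∪ faceCubes m A fun j => ⌊t j * m⌋₊) :
    ∃ v, ∀ z ∈ gridCubeP c, sliceDeviation A t z = v := by
  rw [Finset.mem_union, not_or] at hc
  by_cases hcA : gridCubeP c ⊆ A
  · rcases gridCubeP_subset_or_disjoint_boxSlice hA₁ ht hcA hc.2 with hsub | hdisj
    · exact ⟨_, fun z hz => sliceDeviation_of_mem_boxSlice (hsub hz)⟩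
    · exact ⟨_, fun z hz =>
        sliceDeviation_of_notMem_boxSlice (disjoint_left.1 hdisj hz) (hcA hz)⟩
  · exact ⟨0, fun z hz => sliceDeviation_of_notMem fun hzA =>
      hc.1 (mem_boundaryCubes.2 ⟨⟨z, hz, hzA⟩, hcA⟩)⟩

/-- The unnormalised local discrepancy at `t` of the sample `ω`: the number of its points in
`boxSlice A t`, minus `boxFraction A t` times the number of its points in `A`. -/
noncomputable def localDiscrepancy (A : Set ((Fin d → ℝ) × ℝ)) (t : Fin d → ℝ)
    (ω : GridIndex d m → (Fin d → ℝ) × ℝ) : ℝ :=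
  ∑ c, sliceDeviation A t (ω c)

theorem abs_localDiscrepancy_le (hA₁ : A ⊆ Icc 0 1) (ω : GridIndex d m → (Fin d → ℝ) × ℝ) :
    |localDiscrepancy A t ω| ≤ Fintype.card (GridIndex d m) := by
  have hle (c : GridIndex d m) : |sliceDeviation A t (ω c)| ≤ 1 := by
    have h₀ : 0 ≤ boxFraction A t := boxFraction_nonneg
    have h₁ : boxFraction A t ≤ 1 := boxFraction_le_one hA₁
    obtain ⟨hl, hu⟩ := sliceDeviation_mem_Icc (t := t) hA₁ (ω c)
    exact abs_le.2 ⟨by linarith, by linarith⟩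
  calc |localDiscrepancy A t ω| ≤ ∑ c, |sliceDeviation A t (ω c)| :=
        Finset.abs_sum_le_sum_abs _ _
    _ ≤ ∑ _c : GridIndex d m, 1 := Finset.sum_le_sum fun c _ => hle c
    _ = Fintype.card (GridIndex d m) := by simp

theorem measurable_localDiscrepancy (hA : MeasurableSet A) :
    Measurable fun p : (GridIndex d m → (Fin d → ℝ) × ℝ) × (Fin d → ℝ) =>
      localDiscrepancy A p.2 p.1 :=
  Finset.measurable_fun_sum _ fun c _ => (measurable_uncurry_sliceDeviation hA).comp
    (measurable_snd.prodMk ((measurable_pi_apply c).comp measurable_fst))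

theorem integral_abs_localDiscrepancy_rpow_le (hm : 0 < m) (hA : MeasurableSet A)
    (hA₁ : A ⊆ Icc 0 1) (ht : 0 ≤ t) {q : ℝ} (hq : 2 ≤ q) :
    ∫ ω, |localDiscrepancy A t ω| ^ q ∂stratifiedMeasure d m ≤
      ((boundaryCubes m A ∪ faceCubes m A fun j => ⌊t j * m⌋₊).card : ℝ) ^ (q - 1) := by
  have := isProbabilityMeasure_cond_gridCubeP (d := d) (m := m)
  refine integral_abs_sum_rpow_le (fun c => (measurable_sliceDeviation hA).aemeasurable)
    (fun c => .of_forall (sliceDeviation_mem_Icc hA₁))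
    (sum_integral_sliceDeviation_eq_zero hm hA hA₁) (fun c hc => ?_) hq
  obtain ⟨v, hv⟩ := exists_sliceDeviation_eq_on_gridCubeP hA₁ ht hc
  exact ae_eq_integral_of_ae_eq_const
    (ProbabilityTheory.ae_cond_of_forall_mem (measurableSet_gridCubeP c) hv)

theorem integrable_abs_localDiscrepancy_rpow (hA : MeasurableSet A) (hA₁ : A ⊆ Icc 0 1) {q : ℝ}
    (hq : 0 ≤ q) :
    Integrable (Function.uncurry fun ω t => |localDiscrepancy A t ω| ^ q)
      ((stratifiedMeasure d m).prod (volume.restrict (Icc 0 1))) := by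
  have := isProbabilityMeasure_stratifiedMeasure (d := d) (m := m)
  have : IsFiniteMeasure ((volume : Measure (Fin d → ℝ)).restrict (Icc 0 1)) :=
    isFiniteMeasure_restrict.2 isCompact_Icc.measure_ne_top
  refine .of_mem_Icc 0 ((Fintype.card (GridIndex d m) : ℝ) ^ q)
    ((measurable_localDiscrepancy hA).norm.pow_const q).aemeasurable (.of_forall fun p => ⟨?_, ?_⟩)
  · exact Real.rpow_nonneg (abs_nonneg _) q
  · exact Real.rpow_le_rpow (abs_nonneg _) (abs_localDiscrepancy_le hA₁ p.1) hq

theorem integral_setIntegral_abs_localDiscrepancy_rpow_le (hm : 0 < m) (hA : MeasurableSet A)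
    (hA₁ : A ⊆ Icc 0 1) {K : ℝ} (hK : ∀ k, ((boundaryCubes m A ∪ faceCubes m A k).card : ℝ) ≤ K)
    {q : ℝ} (hq : 2 ≤ q) :
    ∫ ω, (∫ t in Icc 0 1, |localDiscrepancy A t ω| ^ q) ∂stratifiedMeasure d m ≤ K ^ (q - 1) := by
  have := isProbabilityMeasure_stratifiedMeasure (d := d) (m := m)
  have hbound (t : Fin d → ℝ) (ht : t ∈ Icc 0 1) :
      ‖∫ ω, |localDiscrepancy A t ω| ^ q ∂stratifiedMeasure d m‖ ≤ K ^ (q - 1) := by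
    rw [Real.norm_of_nonneg (by positivity)]
    exact (integral_abs_localDiscrepancy_rpow_le hm hA hA₁ ht.1 hq).trans
      (Real.rpow_le_rpow (by positivity) (hK _) (by linarith))
  have hvol : volume.real (Icc (0 : Fin d → ℝ) 1) = 1 := by
    simp [measureReal_def, Real.volume_Icc_pi]
  rw [integral_integral_swap (integrable_abs_localDiscrepancy_rpow hA hA₁ (by linarith))]
  simpa only [hvol, mul_one] using (Real.le_norm_self _).trans
    (norm_setIntegral_le_of_norm_le_const (μ := volume) isCompact_Icc.measure_lt_top hbound)

end LocalDiscrepancy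

section GraphRegion

variable {d : ℕ} {ψ : (Fin d → ℝ) → ℝ} {L : ℝ}

theorem graphRegion_subset_Icc : graphRegion ψ L ⊆ Icc 0 1 := fun _ hz =>
  ⟨⟨hz.1.1, hz.2.1.1⟩, ⟨hz.1.2, hz.2.1.2⟩⟩

theorem measurableSet_graphRegion (hmeas : Measurable ψ) : MeasurableSet (graphRegion ψ L) :=
  (measurable_fst measurableSet_Icc).inter ((measurable_snd measurableSet_Icc).inter
    (measurableSet_le (measurable_snd.const_mul L) (hmeas.comp measurable_fst)))

theorem base_mem_graphRegion {x : Fin d → ℝ} (hx : x ∈ Icc 0 1) (hψ0 : 0 ≤ ψ x) :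
    (x, (0 : ℝ)) ∈ graphRegion ψ L :=
  ⟨hx, ⟨le_rfl, zero_le_one⟩, by simpa only [mul_zero] using hψ0⟩

theorem card_boundaryCubes_union_faceCubes_graphRegion_le {m : ℕ} (hm : 0 < m)
    (hψ0 : ∀ z ∈ Icc (0 : Fin d → ℝ) 1, 0 ≤ ψ z) (k : Fin d → ℕ) :
    ((boundaryCubes m (graphRegion ψ L) ∪ faceCubes m (graphRegion ψ L) k).card : ℝ) ≤
      3 / 2 * (m : ℝ) ^ (d + 1)
        * volume.real (euclNbhdP (frontier (graphRegion ψ L)) (√(d + 1) * (m : ℝ)⁻¹))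
      - (m : ℝ) ^ d :=
  card_boundaryCubes_union_faceCubes_le hm graphRegion_subset_Icc
    (fun x hx => base_mem_graphRegion hx (hψ0 x hx)) k

theorem volume_section_graphRegion (hL : 0 < L) {x : Fin d → ℝ} (hx : x ∈ Icc 0 1)
    (hψL : ψ x ≤ L) : volume (Prod.mk x ⁻¹' graphRegion ψ L) = ENNReal.ofReal (ψ x / L) := by
  have hsection : Prod.mk x ⁻¹' graphRegion ψ L = Icc 0 (ψ x / L) := by
    ext y
    constructor
    · exact fun ⟨_, hy, hle⟩ => ⟨hy.1, (le_div_iff₀' hL).2 hle⟩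
    · exact fun ⟨h₀, hle⟩ =>
        ⟨hx, ⟨h₀, hle.trans ((div_le_one hL).2 hψL)⟩, (le_div_iff₀' hL).1 hle⟩
  rw [hsection, Real.volume_Icc, sub_zero]

theorem volumeReal_prod_inter_graphRegion (hL : 0 < L) (hmeas : Measurable ψ)
    {U : Set (Fin d → ℝ)} (hU : MeasurableSet U) (hU₁ : U ⊆ Icc 0 1)
    (hψ0 : ∀ z ∈ U, 0 ≤ ψ z) (hψL : ∀ z ∈ U, ψ z ≤ L) :
    volume.real ((U ×ˢ Icc (0 : ℝ) 1) ∩ graphRegion ψ L) = (∫ z in U, ψ z) / L := by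
  have hsection (x : Fin d → ℝ) :
      volume (Prod.mk x ⁻¹' ((U ×ˢ Icc (0 : ℝ) 1) ∩ graphRegion ψ L)) =
        U.indicator (fun x => ENNReal.ofReal (ψ x / L)) x := by
    by_cases hx : x ∈ U
    · have hpre : Prod.mk x ⁻¹' ((U ×ˢ Icc (0 : ℝ) 1) ∩ graphRegion ψ L) =
          Prod.mk x ⁻¹' graphRegion ψ L :=
        inter_eq_right.2 fun _ hy => ⟨hx, hy.2.1⟩
      rw [hpre, volume_section_graphRegion hL (hU₁ hx) (hψL x hx), indicator_of_mem hx]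
    · have hpre : Prod.mk x ⁻¹' ((U ×ˢ Icc (0 : ℝ) 1) ∩ graphRegion ψ L) = ∅ :=
        eq_empty_of_forall_notMem fun _ hy => hx hy.1.1
      rw [hpre, measure_empty, indicator_of_notMem hx]
  have hnonneg : 0 ≤ᵐ[volume.restrict U] fun x => ψ x / L :=
    ae_restrict_of_forall_mem hU fun x hx => div_nonneg (hψ0 x hx) hL.le
  rw [measureReal_def, Measure.volume_eq_prod, Measure.prod_apply
    ((hU.prod measurableSet_Icc).inter (measurableSet_graphRegion hmeas)), lintegral_congr hsection,
    lintegral_indicator hU, ← integral_eq_lintegral_of_nonneg_ae hnonneg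
      (hmeas.div_const L).aestronglyMeasurable, integral_div]

theorem boxFraction_graphRegion_mul_integral (hL : 0 < L) (hmeas : Measurable ψ)
    (hψ0 : ∀ z ∈ Icc (0 : Fin d → ℝ) 1, 0 ≤ ψ z) (hψL : ∀ z ∈ Icc (0 : Fin d → ℝ) 1, ψ z ≤ L)
    {t : Fin d → ℝ} (ht : t ∈ Icc 0 1) :
    boxFraction (graphRegion ψ L) t * ∫ z in Icc 0 1, ψ z = ∫ z in lowerBox t, ψ z := by
  have hU : lowerBox t ⊆ Icc 0 1 := lowerBox_subset_Icc ht
  have hslice : volume.real (boxSlice (graphRegion ψ L) t) = (∫ z in lowerBox t, ψ z) / L :=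
    volumeReal_prod_inter_graphRegion hL hmeas measurableSet_lowerBox hU
      (fun z hz => hψ0 z (hU hz)) fun z hz => hψL z (hU hz)
  have hcover : graphRegion ψ L ⊆ Icc 0 1 ×ˢ Icc 0 1 := fun _ hz => ⟨hz.1, hz.2.1⟩
  have htotal : volume.real (graphRegion ψ L) = (∫ z in Icc 0 1, ψ z) / L := by
    rw [← volumeReal_prod_inter_graphRegion hL hmeas measurableSet_Icc subset_rfl hψ0 hψL,
      inter_eq_right.2 hcover]
  have hmul := boxFraction_mul_volumeReal (t := t) (graphRegion_subset_Icc (ψ := ψ) (L := L))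
  rwa [hslice, htotal, ← mul_div_assoc, div_left_inj' hL.ne'] at hmul

end GraphRegion

section AcceptedPoints

variable {d m : ℕ} {A : Set ((Fin d → ℝ) × ℝ)} {t : Fin d → ℝ}

theorem natCard_accepted_eq_sum_indicator (ω : GridIndex d m → (Fin d → ℝ) × ℝ) :
    (Nat.card {c // ω c ∈ A} : ℝ) = ∑ c, A.indicator (fun _ => (1 : ℝ)) (ω c) := by
  classical
  rw [Nat.card_eq_fintype_card, Fintype.card_subtype, Finset.natCast_card_filter]
  simp only [indicator_apply]

theorem localDiscrepancy_eq_sum_indicator_sub (ω : GridIndex d m → (Fin d → ℝ) × ℝ) :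
    localDiscrepancy A t ω = (∑ c, (boxSlice A t).indicator (fun _ => (1 : ℝ)) (ω c))
      - boxFraction A t * Nat.card {c // ω c ∈ A} := by
  rw [natCard_accepted_eq_sum_indicator, Finset.mul_sum, ← Finset.sum_sub_distrib]
  rfl

theorem localDiscrepancy_eq_natCard_mul (ω : GridIndex d m → (Fin d → ℝ) × ℝ) :
    localDiscrepancy A t ω = (Nat.card {c // ω c ∈ A} : ℝ) *
      (1 / (Nat.card {c // ω c ∈ A} : ℝ)
        * (∑ c, (boxSlice A t).indicator (fun _ => (1 : ℝ)) (ω c)) - boxFraction A t) := by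
  have hsum_le : ∑ c, (boxSlice A t).indicator (fun _ => (1 : ℝ)) (ω c) ≤
      Nat.card {c // ω c ∈ A} := by
    rw [natCard_accepted_eq_sum_indicator]
    exact Finset.sum_le_sum fun c _ =>
      indicator_le_indicator_of_subset boxSlice_subset (fun _ => zero_le_one) _
  have hsum_nonneg : 0 ≤ ∑ c, (boxSlice A t).indicator (fun _ => (1 : ℝ)) (ω c) :=
    Finset.sum_nonneg fun c _ => indicator_nonneg (fun _ _ => zero_le_one) _
  -- If no point is accepted then both counts vanish, so `1 / 0 = 0` does no harm.
  have hcancel := mul_div_cancel_of_imp' fun h => le_antisymm (hsum_le.trans_eq h) hsum_nonneg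
  rw [localDiscrepancy_eq_sum_indicator_sub, mul_sub, one_div_mul_eq_div, hcancel, mul_comm]

theorem natCard_rpow_mul_abs_rpow (ω : GridIndex d m → (Fin d → ℝ) × ℝ) (q : ℝ) :
    (Nat.card {c // ω c ∈ A} : ℝ) ^ q *
      |1 / (Nat.card {c // ω c ∈ A} : ℝ)
        * (∑ c, (boxSlice A t).indicator (fun _ => (1 : ℝ)) (ω c)) - boxFraction A t| ^ q =
      |localDiscrepancy A t ω| ^ q := by
  rw [← Real.mul_rpow (Nat.cast_nonneg _) (abs_nonneg _), localDiscrepancy_eq_natCard_mul, abs_mul,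
    Nat.abs_cast]


theorem natCard_rpow_mul_setIntegral_abs_rpow {L : ℝ} (hL : 0 < L) {ψ : (Fin d → ℝ) → ℝ}
    (hmeas : Measurable ψ) (hψ0 : ∀ z ∈ Icc (0 : Fin d → ℝ) 1, 0 ≤ ψ z)
    (hψL : ∀ z ∈ Icc (0 : Fin d → ℝ) 1, ψ z ≤ L)
    {C : ℝ} (hC : C = ∫ z in Icc (0 : Fin d → ℝ) 1, ψ z) (hCpos : 0 < C)
    (ω : GridIndex d m → (Fin d → ℝ) × ℝ) (q : ℝ) :
    (Nat.card {c // ω c ∈ graphRegion ψ L} : ℝ) ^ q * ∫ t in Icc (0 : Fin d → ℝ) 1,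
        |1 / (Nat.card {c // ω c ∈ graphRegion ψ L} : ℝ)
          * (∑ c, (Jstar ψ L t).indicator (fun _ => (1 : ℝ)) (ω c))
          - 1 / C * ∫ z in lowerBox t, ψ z| ^ q =
      ∫ t in Icc 0 1, |localDiscrepancy (graphRegion ψ L) t ω| ^ q := by
  have hfraction (t : Fin d → ℝ) (ht : t ∈ Icc 0 1) :
      1 / C * ∫ z in lowerBox t, ψ z = boxFraction (graphRegion ψ L) t := by
    have hmul := boxFraction_graphRegion_mul_integral hL hmeas hψ0 hψL ht
    rw [one_div_mul_eq_div, eq_comm, eq_div_iff hCpos.ne', hC, hmul]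
  rw [← integral_const_mul]
  refine setIntegral_congr_fun measurableSet_Icc fun t ht => ?_
  rw [← natCard_rpow_mul_abs_rpow, ← hfraction t ht]
  rfl

end AcceptedPoints

theorem expected_Lq_discrepancy_stratified_general (d : ℕ)
    (L : ℝ) (hL : 0 < L) (ψ : (Fin d → ℝ) → ℝ) (hmeas : Measurable ψ)
    (hψ0 : ∀ z ∈ Icc (0 : Fin d → ℝ) 1, 0 ≤ ψ z)
    (hψL : ∀ z ∈ Icc (0 : Fin d → ℝ) 1, ψ z ≤ L)
    (C : ℝ) (hC : C = ∫ z in Icc (0 : Fin d → ℝ) 1, ψ z) (hCpos : 0 < C)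
    (m : ℕ) (hm : 0 < m) (q : ℝ) (hq : 2 ≤ q) :
    (∫ ω, ((Nat.card {c : (Fin d → Fin m) × Fin m // ω c ∈ graphRegion ψ L} : ℝ) ^ q
          * ∫ t in Icc (0 : Fin d → ℝ) 1,
              |(1 / (Nat.card {c : (Fin d → Fin m) × Fin m // ω c ∈ graphRegion ψ L} : ℝ))
                  * (∑ c, (Jstar ψ L t).indicator (fun _ => (1 : ℝ)) (ω c))
                - (1 / C) * ∫ z in lowerBox t, ψ z| ^ q)
        ∂(stratifiedMeasure d m)) ^ (1 / q)
      ≤ (3 / 2 * (m : ℝ) ^ (d + 1)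
          * volume.real (euclNbhdP (frontier (graphRegion ψ L)) (√(d + 1) * (m : ℝ)⁻¹))
        - (m : ℝ) ^ d) ^ (1 - 1 / q) := by
  have hcard := card_boundaryCubes_union_faceCubes_graphRegion_le (L := L) hm hψ0
  have hq₁ : 1 - 1 / q = (q - 1) * (1 / q) := by field_simp
  rw [hq₁, Real.rpow_mul ((Nat.cast_nonneg _).trans (hcard 0))]
  refine Real.rpow_le_rpow (by positivity) ?_ (by positivity)
  refine (integral_congr_ae (.of_forall fun ω =>
    natCard_rpow_mul_setIntegral_abs_rpow hL hmeas hψ0 hψL hC hCpos ω q)).trans_le ?_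
  exact integral_setIntegral_abs_localDiscrepancy_rpow_le hm (measurableSet_graphRegion hmeas)
    graphRegion_subset_Icc hcard hq

/-- **Moment bound for the weighted `L_q` discrepancy of the stratified
acceptance-rejection sampler** (Theorem 2 of the paper, with `s = d+1`): for every real
`2 ≤ q < ∞` and all large `m`,
`(E[N^q L_{q,N,ψ}^q])^{1/q} ≤ (3 √s M_A m^{s-1})^{1-1/q}`, where `N(ω) = #{c : ω_c ∈ A}`
and `∑_c 1_{J_t*}(ω_c) = ∑_n 1_{[0,t)}(y_n)` counts the projected accepted points. -/
theorem expected_Lq_discrepancy_stratified (d : ℕ) (hd : 1 ≤ d)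
    (L : ℝ) (hL : 0 < L) (ψ : (Fin d → ℝ) → ℝ) (hmeas : Measurable ψ)
    (hψ0 : ∀ z ∈ Icc (0 : Fin d → ℝ) 1, 0 ≤ ψ z)
    (hψL : ∀ z ∈ Icc (0 : Fin d → ℝ) 1, ψ z ≤ L)
    (C : ℝ) (hC : C = ∫ z in Icc (0 : Fin d → ℝ) 1, ψ z) (hCpos : 0 < C)
    (MA : ℝ) (hMApos : 0 < MA) (hMink : HasMinkowskiContentP (graphRegion ψ L) MA) :
    ∃ m₀ : ℕ, ∀ m : ℕ, m₀ ≤ m → ∀ q : ℝ, 2 ≤ q →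
      (∫ ω, ((Nat.card {c : (Fin d → Fin m) × Fin m // ω c ∈ graphRegion ψ L} : ℝ) ^ q
            * ∫ t in Icc (0 : Fin d → ℝ) 1,
                |(1 / (Nat.card {c : (Fin d → Fin m) × Fin m // ω c ∈ graphRegion ψ L} : ℝ))
                    * (∑ c, (Jstar ψ L t).indicator (fun _ => (1 : ℝ)) (ω c))
                  - (1 / C) * ∫ z in lowerBox t, ψ z| ^ q)
          ∂(stratifiedMeasure d m)) ^ (1 / q)
        ≤ (3 * Real.sqrt (d + 1) * MA * (m : ℝ) ^ d) ^ (1 - 1 / q) := by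
  obtain ⟨m₀, hm₀⟩ := eventually_atTop.1
    ((eventually_volumeReal_euclNbhdP_frontier_le hMink).and (eventually_gt_atTop 0))
  refine ⟨m₀, fun m hmm₀ q hq => ?_⟩
  obtain ⟨hle, hm⟩ := hm₀ m hmm₀
  have hcard := card_boundaryCubes_union_faceCubes_graphRegion_le (L := L) hm hψ0 0
  have hq₁ : 0 ≤ 1 - 1 / q := sub_nonneg.2 (div_le_one_of_le₀ (by linarith) (by linarith))
  refine (expected_Lq_discrepancy_stratified_general d L hL ψ hmeas hψ0 hψL C hC hCpos
    m hm q hq).trans ?_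
  exact Real.rpow_le_rpow ((Nat.cast_nonneg _).trans hcard) hle hq₁
end

section
/- Let b ≥ 2 and ℓ ≥ 2 be integers and let ψ_ℓ : [0,1) → [0,1] be the digit function ψ_ℓ(x) = Σ_{i=1}^∞ ξ_i b^{−i(ℓ−1)}, where ξ_1, ξ_2, … are the b-adic digits of x (not eventually b−1). Then for every k ∈ ℕ, the covering number satisfies Γ_k(ψ_ℓ) ≤ ℓ b^{k/ℓ + ℓ − 1}, i.e. Γ_k(ψ_ℓ) ≤ ℓ b^{ℓ−1} b^{⌈k/ℓ⌉}, where Γ_k(ψ_ℓ) is the supremum over t ∈ [0,1] of the minimal number of pairwise disjoint 2-dimensional b-adic elementary intervals of order k needed to cover ∂J_t* \ ∂[0,1]², with A = {(x,y) ∈ [0,1]² : ψ_ℓ(x) ≥ y} and J_t* = ([0,t) × [0,1]) ∩ A. -/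
open MeasureTheory Set

/-- The digit function `ψ_ℓ(x) = ∑_{i≥1} ξ_i b^{-i(ℓ-1)}`, where
`ξ_i = ⌊b^i x⌋ - b⌊b^{i-1} x⌋` are the `b`-adic digits of `x` (not eventually `b-1`). -/
noncomputable def psiDigit (b ℓ : ℕ) (x : ℝ) : ℝ :=
  ∑' i : ℕ, ((⌊(b : ℝ) ^ (i + 1) * x⌋ - (b : ℤ) * ⌊(b : ℝ) ^ i * x⌋ : ℤ) : ℝ)
    / (b : ℝ) ^ ((i + 1) * (ℓ - 1))

/-- The region `A = {(x,y) ∈ [0,1]² : ψ_ℓ(x) ≥ y}`. -/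
noncomputable def regionA (b ℓ : ℕ) : Set (ℝ × ℝ) :=
  {p | p.1 ∈ Icc (0 : ℝ) 1 ∧ p.2 ∈ Icc (0 : ℝ) 1 ∧ p.2 ≤ psiDigit b ℓ p.1}

/-- The test set `J_t* = ([0,t) × [0,1]) ∩ A`. -/
noncomputable def Jstar2 (b ℓ : ℕ) (t : ℝ) : Set (ℝ × ℝ) :=
  (Ico (0 : ℝ) t ×ˢ Icc (0 : ℝ) 1) ∩ regionA b ℓ

/-- The closed unit square `[0,1]²`. -/
def unitSq : Set (ℝ × ℝ) := Icc (0 : ℝ) 1 ×ˢ Icc (0 : ℝ) 1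

/-- A 2-dimensional `b`-adic elementary interval of order `k`. -/
def IsElemInterval2 (b k : ℕ) (E : Set (ℝ × ℝ)) : Prop :=
  ∃ d₁ d₂ a₁ a₂ : ℕ, a₁ < b ^ d₁ ∧ a₂ < b ^ d₂ ∧ d₁ + d₂ = k ∧
    E = Ico ((a₁ : ℝ) / b ^ d₁) (((a₁ : ℝ) + 1) / b ^ d₁)
          ×ˢ Ico ((a₂ : ℝ) / b ^ d₂) (((a₂ : ℝ) + 1) / b ^ d₂)

/-!
Say that a point `p` below the graph of `ψ_ℓ` is separated at level `i` if its row of height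
`b ^ (-i (ℓ - 1))` lies strictly below the row meeting the graph over `p.1`. The first `i (ℓ - 1)`
digits of `ψ_ℓ(x)` depend only on the first `i` digits of `x`, so an elementary interval of order
`k` and height `b ^ (-i (ℓ - 1))` with `i ℓ ≤ k` has all its points separated at the same
levels `≤ i`. Hence giving each point the interval whose height is set by its first separation
level, truncated at `D = ⌊k / ℓ⌋`, partitions the square.

The part of `∂J_t*` inside the open square lies on the graph of `ψ_ℓ`, the fillings of its jumps,
and the line `x = t`. Points not separated at their truncated level meet at most one interval per
column of width `b ^ (-(k - D (ℓ - 1)))`; a jump meets at most one further interval, and only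
when it sits at a multiple of `b ^ (-D)`; the line meets fewer than `b` further intervals on each of
the levels `1, …, D`.
-/

section

open Filter Topology

variable {b ℓ : ℕ}

/-! ### Digits and the digit function -/

lemma floor_pow_mul_eq_floor_div (hb : 0 < b) {i d : ℕ} (hid : i ≤ d) (x : ℝ) :
    ⌊(b : ℝ) ^ i * x⌋ = ⌊(b : ℝ) ^ d * x⌋ / (b : ℤ) ^ (d - i) := by
  rw [← Int.cast_mul_floor_div_cancel_of_pos (pow_pos (Int.natCast_pos.mpr hb) (d - i))]
  push_cast
  rw [← mul_assoc, pow_sub_mul_pow _ hid]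

lemma floor_pow_mul_congr (hb : 0 < b) {i d : ℕ} (hid : i ≤ d) {x u : ℝ}
    (h : ⌊(b : ℝ) ^ d * x⌋ = ⌊(b : ℝ) ^ d * u⌋) : ⌊(b : ℝ) ^ i * x⌋ = ⌊(b : ℝ) ^ i * u⌋ := by
  rw [floor_pow_mul_eq_floor_div hb hid, h, ← floor_pow_mul_eq_floor_div hb hid]

lemma floor_pow_mul_mem_Ico (hb : 0 < b) (d : ℕ) {x : ℝ} (hx : x ∈ Ico (0 : ℝ) 1) :
    ⌊(b : ℝ) ^ d * x⌋ ∈ Finset.Ico (0 : ℤ) ((b ^ d : ℕ) : ℤ) := by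
  rw [Finset.mem_Ico, Int.floor_lt]
  push_cast
  exact ⟨Int.floor_nonneg.mpr (mul_nonneg (by positivity) hx.1),
    mul_lt_of_lt_one_right (by positivity) hx.2⟩

/-- The `b`-adic digit `ξ_{i+1}` of `x`: indices start at `0`, as in the series `psiDigit`. -/
noncomputable def adicDigit (b : ℕ) (x : ℝ) (i : ℕ) : ℤ :=
  ⌊(b : ℝ) ^ (i + 1) * x⌋ - (b : ℤ) * ⌊(b : ℝ) ^ i * x⌋

lemma adicDigit_eq_emod (hb : 0 < b) (x : ℝ) (i : ℕ) :
    adicDigit b x i = ⌊(b : ℝ) ^ (i + 1) * x⌋ % b := by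
  rw [adicDigit, floor_pow_mul_eq_floor_div hb (Nat.le_add_right i 1), Int.emod_def,
    Nat.add_sub_cancel_left, pow_one]

lemma adicDigit_nonneg (hb : 0 < b) (x : ℝ) (i : ℕ) : 0 ≤ adicDigit b x i := by
  rw [adicDigit_eq_emod hb]
  exact Int.emod_nonneg _ (by exact_mod_cast hb.ne')

lemma adicDigit_lt (hb : 0 < b) (x : ℝ) (i : ℕ) : adicDigit b x i < b := by
  rw [adicDigit_eq_emod hb]
  exact Int.emod_lt_of_pos _ (by exact_mod_cast hb)

lemma adicDigit_pow_mul (b : ℕ) (x : ℝ) (i j : ℕ) :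
    adicDigit b ((b : ℝ) ^ i * x) j = adicDigit b x (j + i) := by
  simp only [adicDigit, ← mul_assoc, ← pow_add, add_right_comm j 1 i]

lemma adicDigit_div_pow (hb : 0 < b) (x : ℝ) (i : ℕ) :
    (adicDigit b x i : ℝ) / (b : ℝ) ^ (i + 1) =
      ⌊(b : ℝ) ^ (i + 1) * x⌋ / (b : ℝ) ^ (i + 1) - ⌊(b : ℝ) ^ i * x⌋ / (b : ℝ) ^ i := by
  rw [adicDigit]
  push_cast
  field_simp
  ring

lemma adicDigit_eq_zero_of_le {i j : ℕ} (hij : i ≤ j) {x : ℝ}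
    (hx : (⌊(b : ℝ) ^ i * x⌋ : ℝ) = (b : ℝ) ^ i * x) : adicDigit b x j = 0 := by
  have hfloor : ∀ n, i ≤ n → ⌊(b : ℝ) ^ n * x⌋ = (b : ℤ) ^ (n - i) * ⌊(b : ℝ) ^ i * x⌋ := by
    intro n hn
    calc ⌊(b : ℝ) ^ n * x⌋ = ⌊(((b : ℤ) ^ (n - i) * ⌊(b : ℝ) ^ i * x⌋ : ℤ) : ℝ)⌋ := by
          push_cast
          rw [hx, ← mul_assoc, pow_sub_mul_pow _ hn]
      _ = (b : ℤ) ^ (n - i) * ⌊(b : ℝ) ^ i * x⌋ := Int.floor_intCast _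
  rw [adicDigit, hfloor j hij, hfloor (j + 1) (by omega), Nat.succ_sub hij, pow_succ']
  ring

lemma psiDigit_term_nonneg (hb : 0 < b) (ℓ : ℕ) (x : ℝ) (i : ℕ) :
    0 ≤ (adicDigit b x i : ℝ) / (b : ℝ) ^ ((i + 1) * (ℓ - 1)) :=
  div_nonneg (by exact_mod_cast adicDigit_nonneg hb x i) (by positivity)

lemma sum_psiDigit_term_le_fract (hb : 0 < b) (hℓ : 2 ≤ ℓ) (x : ℝ) (n : ℕ) :
    ∑ i ∈ Finset.range n, (adicDigit b x i : ℝ) / (b : ℝ) ^ ((i + 1) * (ℓ - 1)) ≤ Int.fract x := by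
  have hb1 : (1 : ℝ) ≤ b := by exact_mod_cast hb
  calc ∑ i ∈ Finset.range n, (adicDigit b x i : ℝ) / (b : ℝ) ^ ((i + 1) * (ℓ - 1))
      ≤ ∑ i ∈ Finset.range n, (adicDigit b x i : ℝ) / (b : ℝ) ^ (i + 1) := by
        gcongr with i
        · exact_mod_cast adicDigit_nonneg hb x i
        · exact Nat.le_mul_of_pos_right _ (by omega)
    _ = ⌊(b : ℝ) ^ n * x⌋ / (b : ℝ) ^ n - ⌊x⌋ := by
        simp only [adicDigit_div_pow hb]
        rw [Finset.sum_range_sub fun i => (⌊(b : ℝ) ^ i * x⌋ : ℝ) / (b : ℝ) ^ i]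
        simp only [pow_zero, one_mul, div_one]
    _ ≤ Int.fract x := by
        rw [← Int.self_sub_floor]
        gcongr
        rw [div_le_iff₀' (by positivity)]
        exact Int.floor_le _

lemma psiDigit_summable (hb : 0 < b) (hℓ : 2 ≤ ℓ) (x : ℝ) :
    Summable fun i => (adicDigit b x i : ℝ) / (b : ℝ) ^ ((i + 1) * (ℓ - 1)) :=
  summable_of_sum_range_le (psiDigit_term_nonneg hb ℓ x) (sum_psiDigit_term_le_fract hb hℓ x)

lemma psiDigit_nonneg (hb : 0 < b) (ℓ : ℕ) (x : ℝ) : 0 ≤ psiDigit b ℓ x :=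
  tsum_nonneg (psiDigit_term_nonneg hb ℓ x)

lemma psiDigit_lt_one (hb : 0 < b) (hℓ : 2 ≤ ℓ) (x : ℝ) : psiDigit b ℓ x < 1 :=
  (Real.tsum_le_of_sum_range_le (psiDigit_term_nonneg hb ℓ x)
    (sum_psiDigit_term_le_fract hb hℓ x)).trans_lt (Int.fract_lt_one x)

lemma floor_psiDigit (hb : 0 < b) (hℓ : 2 ≤ ℓ) (x : ℝ) : ⌊psiDigit b ℓ x⌋ = 0 :=
  Int.floor_eq_zero_iff.mpr ⟨psiDigit_nonneg hb ℓ x, psiDigit_lt_one hb hℓ x⟩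

lemma pow_mul_psiDigit (hb : 0 < b) (hℓ : 2 ≤ ℓ) (x : ℝ) :
    (b : ℝ) ^ (ℓ - 1) * psiDigit b ℓ x = adicDigit b x 0 + psiDigit b ℓ (b * x) := by
  have htail : ∀ i, (b : ℝ) ^ (ℓ - 1) *
      ((adicDigit b x (i + 1) : ℝ) / (b : ℝ) ^ ((i + 1 + 1) * (ℓ - 1))) =
        adicDigit b (b * x) i / (b : ℝ) ^ ((i + 1) * (ℓ - 1)) := by
    intro i
    have hdigit := adicDigit_pow_mul b x 1 i
    rw [pow_one] at hdigit
    rw [hdigit, add_mul (i + 1) 1, one_mul, pow_add]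
    field_simp
  have hsum := (psiDigit_summable hb hℓ x).tsum_eq_zero_add
  change psiDigit b ℓ x = _ at hsum
  rw [hsum, mul_add, ← tsum_mul_left]
  simp only [htail, zero_add, one_mul]
  rw [mul_div_cancel₀ _ (by positivity)]
  rfl

lemma fract_pow_mul_psiDigit (hb : 0 < b) (hℓ : 2 ≤ ℓ) (x : ℝ) (i : ℕ) :
    Int.fract ((b : ℝ) ^ (i * (ℓ - 1)) * psiDigit b ℓ x) = psiDigit b ℓ ((b : ℝ) ^ i * x) := by
  induction i generalizing x with
  | zero =>
    simpa using ⟨psiDigit_nonneg hb ℓ x, psiDigit_lt_one hb hℓ x⟩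
  | succ i ih =>
    rw [add_mul, one_mul, pow_add, mul_assoc, pow_mul_psiDigit hb hℓ, mul_add]
    have : (b : ℝ) ^ (i * (ℓ - 1)) * (adicDigit b x 0 : ℝ) =
      (((b : ℤ) ^ (i * (ℓ - 1)) * adicDigit b x 0 : ℤ) : ℝ) := by push_cast; rfl
    rw [this, Int.fract_intCast_add, ih, ← mul_assoc, pow_succ]

lemma floor_pow_succ_mul_psiDigit (hb : 0 < b) (hℓ : 2 ≤ ℓ) (x : ℝ) (i : ℕ) :
    ⌊(b : ℝ) ^ ((i + 1) * (ℓ - 1)) * psiDigit b ℓ x⌋ =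
      (b : ℤ) ^ (ℓ - 1) * ⌊(b : ℝ) ^ (i * (ℓ - 1)) * psiDigit b ℓ x⌋ + adicDigit b x i := by
  have hstep := pow_mul_psiDigit hb hℓ ((b : ℝ) ^ i * x)
  rw [adicDigit_pow_mul, zero_add] at hstep
  have hsplit : (b : ℝ) ^ ((i + 1) * (ℓ - 1)) * psiDigit b ℓ x =
      (b : ℝ) ^ (ℓ - 1) * (⌊(b : ℝ) ^ (i * (ℓ - 1)) * psiDigit b ℓ x⌋ : ℝ) + adicDigit b x i +
        psiDigit b ℓ (b * ((b : ℝ) ^ i * x)) := by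
    rw [add_assoc, ← hstep, ← fract_pow_mul_psiDigit hb hℓ, ← mul_add, Int.floor_add_fract,
      add_one_mul, pow_add]
    ring
  rw [Int.floor_eq_iff, hsplit]
  push_cast
  constructor <;> linarith [psiDigit_nonneg hb ℓ (b * ((b : ℝ) ^ i * x)),
    psiDigit_lt_one hb hℓ (b * ((b : ℝ) ^ i * x))]

lemma floor_pow_mul_psiDigit_congr (hb : 0 < b) (hℓ : 2 ≤ ℓ) {x u : ℝ} {i : ℕ}
    (h : ⌊(b : ℝ) ^ i * x⌋ = ⌊(b : ℝ) ^ i * u⌋) :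
    ⌊(b : ℝ) ^ (i * (ℓ - 1)) * psiDigit b ℓ x⌋ =
      ⌊(b : ℝ) ^ (i * (ℓ - 1)) * psiDigit b ℓ u⌋ := by
  induction i with
  | zero => simp only [zero_mul, pow_zero, one_mul, floor_psiDigit hb hℓ]
  | succ i ih =>
    have hi := floor_pow_mul_congr hb i.le_succ h
    rw [floor_pow_succ_mul_psiDigit hb hℓ, floor_pow_succ_mul_psiDigit hb hℓ, ih hi, adicDigit,
      adicDigit, h, hi]

lemma floor_pow_succ_mul_psiDigit_sub (hb : 0 < b) (hℓ : 2 ≤ ℓ) {x : ℝ} {i : ℕ}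
    (hdigit : 0 < adicDigit b x i) :
    ⌊(b : ℝ) ^ ((i + 1) * (ℓ - 1)) * psiDigit b ℓ (x - 1 / (b : ℝ) ^ (i + 1))⌋ =
      ⌊(b : ℝ) ^ ((i + 1) * (ℓ - 1)) * psiDigit b ℓ x⌋ - 1 := by
  have hpre : ⌊(b : ℝ) ^ (i + 1) * (x - 1 / (b : ℝ) ^ (i + 1))⌋ =
      ⌊(b : ℝ) ^ (i + 1) * x⌋ - 1 := by
    rw [mul_sub, mul_one_div_cancel (by positivity), Int.floor_sub_one]
  have hpre' : ⌊(b : ℝ) ^ i * (x - 1 / (b : ℝ) ^ (i + 1))⌋ = ⌊(b : ℝ) ^ i * x⌋ := by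
    rw [floor_pow_mul_eq_floor_div hb (Nat.le_add_right i 1), hpre, Nat.add_sub_cancel_left,
      pow_one]
    refine ((Int.ediv_emod_unique (r := adicDigit b x i - 1) (Int.natCast_pos.mpr hb)).mpr
      ⟨?_, by omega, by linarith [adicDigit_lt hb x i]⟩).1
    rw [adicDigit]
    ring
  rw [floor_pow_succ_mul_psiDigit hb hℓ, floor_pow_succ_mul_psiDigit hb hℓ,
    floor_pow_mul_psiDigit_congr hb hℓ hpre', adicDigit, adicDigit, hpre, hpre']
  ring

lemma psiDigit_strictMonoOn (hb : 2 ≤ b) (hℓ : 2 ≤ ℓ) :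
    StrictMonoOn (psiDigit b ℓ) (Ico 0 1) := by
  intro x hx u hu hxu
  have hb0 : 0 < b := by omega
  have hdiff : ∃ i, ⌊(b : ℝ) ^ i * x⌋ ≠ ⌊(b : ℝ) ^ i * u⌋ := by
    obtain ⟨i, hi⟩ := pow_unbounded_of_one_lt (1 / (u - x)) (Nat.one_lt_cast (α := ℝ).mpr hb)
    refine ⟨i, fun h => (Int.abs_sub_lt_one_of_floor_eq_floor h.symm).not_ge ?_⟩
    rw [div_lt_iff₀ (sub_pos.mpr hxu)] at hi
    rw [← mul_sub]
    exact hi.le.trans (le_abs_self _)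
  obtain ⟨i, hi⟩ : ∃ i, Nat.find hdiff = i + 1 := by
    refine Nat.exists_eq_succ_of_ne_zero fun h => Nat.find_spec hdiff ?_
    simp only [h, pow_zero, one_mul, Int.floor_eq_zero_iff.mpr hx, Int.floor_eq_zero_iff.mpr hu]
  have hagree : ⌊(b : ℝ) ^ i * x⌋ = ⌊(b : ℝ) ^ i * u⌋ :=
    not_not.mp (Nat.find_min hdiff (m := i) (by omega))
  have hdigit : adicDigit b x i < adicDigit b u i := by
    rw [adicDigit, adicDigit, hagree]
    exact sub_lt_sub_right (lt_of_le_of_ne (by gcongr) (hi ▸ Nat.find_spec hdiff)) _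
  have hfloor : ⌊(b : ℝ) ^ ((i + 1) * (ℓ - 1)) * psiDigit b ℓ x⌋ <
      ⌊(b : ℝ) ^ ((i + 1) * (ℓ - 1)) * psiDigit b ℓ u⌋ := by
    rw [floor_pow_succ_mul_psiDigit hb0 hℓ, floor_pow_succ_mul_psiDigit hb0 hℓ,
      floor_pow_mul_psiDigit_congr hb0 hℓ hagree]
    exact add_lt_add_right hdigit _
  exact lt_of_mul_lt_mul_left (Int.floor_mono.reflect_lt hfloor) (by positivity)

lemma psiDigit_continuousWithinAt_Ici (hb : 2 ≤ b) (hℓ : 2 ≤ ℓ) (x : ℝ) :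
    ContinuousWithinAt (psiDigit b ℓ) (Ici x) x := by
  rw [ContinuousWithinAt, Metric.tendsto_nhds]
  intro ε hε
  obtain ⟨i, hi⟩ := pow_unbounded_of_one_lt (1 / ε)
    (one_lt_pow₀ (Nat.one_lt_cast (α := ℝ).mpr hb) (n := ℓ - 1) (by omega))
  have hpre : ∀ᶠ u in 𝓝[≥] x, ⌊(b : ℝ) ^ i * u⌋ = ⌊(b : ℝ) ^ i * x⌋ := by
    have hscale : Tendsto (fun u => (b : ℝ) ^ i * u) (𝓝[≥] x) (𝓝[≥] ((b : ℝ) ^ i * x)) :=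
      (continuous_const_mul _).continuousWithinAt.tendsto_nhdsWithin
        fun u (hu : x ≤ u) => mul_le_mul_of_nonneg_left hu (by positivity)
    exact tendsto_pure.mp ((tendsto_floor_right_pure_floor _).comp hscale)
  filter_upwards [hpre] with u hu
  have hclose := Int.abs_sub_lt_one_of_floor_eq_floor
    (floor_pow_mul_psiDigit_congr (by omega : 0 < b) hℓ hu)
  rw [← mul_sub, abs_mul, abs_of_nonneg (by positivity), mul_comm i, pow_mul] at hclose
  rw [div_lt_iff₀ hε] at hi
  exact lt_of_mul_lt_mul_left (hclose.trans hi) (by positivity)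

lemma psiDigit_upperSemicontinuousAt (hb : 2 ≤ b) (hℓ : 2 ≤ ℓ) {x : ℝ}
    (hx : x ∈ Ioo (0 : ℝ) 1) : UpperSemicontinuousAt (psiDigit b ℓ) x := by
  rw [upperSemicontinuousAt_iff]
  intro y hy
  rw [← nhdsLE_sup_nhdsGE, eventually_sup]
  refine ⟨?_, (psiDigit_continuousWithinAt_Ici hb hℓ x).eventually (eventually_lt_nhds hy)⟩
  filter_upwards [Ioc_mem_nhdsLE hx.1] with u hu
  exact ((psiDigit_strictMonoOn hb hℓ).monotoneOn ⟨hu.1.le, hu.2.trans_lt hx.2⟩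
    ⟨hx.1.le, hx.2⟩ hu.2).trans_lt hy

/-! ### The boundary -/

/-- A set carrying the part of `∂J_t*` inside the open unit square: the graph of `ψ_ℓ`, the
vertical segments bridging its jumps, and the vertical segment below the graph at `t`. -/
def staircase (b ℓ : ℕ) (t : ℝ) : Set (ℝ × ℝ) :=
  {p | p ∈ Ioo (0 : ℝ) 1 ×ˢ Ioo (0 : ℝ) 1 ∧ p.2 ≤ psiDigit b ℓ p.1 ∧
    (p.1 = t ∨ ∀ u ∈ Ico 0 p.1, psiDigit b ℓ u ≤ p.2)}

lemma le_psiDigit_of_mem_closure_Jstar2 (hb : 2 ≤ b) (hℓ : 2 ≤ ℓ) {t : ℝ}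
    {p : ℝ × ℝ} (hp : p ∈ closure (Jstar2 b ℓ t)) (hx : p.1 ∈ Ioo (0 : ℝ) 1) :
    p.2 ≤ psiDigit b ℓ p.1 := by
  by_contra! hlt
  obtain ⟨z, hψz, hzy⟩ := exists_between hlt
  have hbelow : ∀ᶠ u in 𝓝 p.1, psiDigit b ℓ u < z :=
    upperSemicontinuousAt_iff.mp (psiDigit_upperSemicontinuousAt hb hℓ hx) z hψz
  have habove : ∀ᶠ q in 𝓝 p, psiDigit b ℓ q.1 < q.2 := by
    filter_upwards [continuousAt_fst.eventually hbelow,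
      continuousAt_snd.eventually (eventually_gt_nhds hzy)] with q hq₁ hq₂
    exact hq₁.trans hq₂
  obtain ⟨q, hqJ, hq⟩ := ((mem_closure_iff_frequently.mp hp).and_eventually habove).exists
  exact hq.not_ge hqJ.2.2.2

lemma mem_interior_Jstar2 (hb : 2 ≤ b) (hℓ : 2 ≤ ℓ) {t : ℝ} (ht : t ≤ 1)
    {p : ℝ × ℝ} {u : ℝ} (hu : 0 ≤ u) (hup : u < p.1) (hpt : p.1 < t) (hp₂ : 0 < p.2)
    (hpu : p.2 < psiDigit b ℓ u) : p ∈ interior (Jstar2 b ℓ t) := by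
  refine mem_interior.mpr ⟨Ioo u t ×ˢ Ioo 0 (psiDigit b ℓ u), ?_, isOpen_Ioo.prod isOpen_Ioo,
    ⟨hup, hpt⟩, hp₂, hpu⟩
  rintro ⟨w, v⟩ ⟨⟨huw, hwt⟩, hv, hvu⟩
  have hw1 : w < 1 := hwt.trans_le ht
  have hmono : psiDigit b ℓ u < psiDigit b ℓ w :=
    psiDigit_strictMonoOn hb hℓ ⟨hu, huw.trans hw1⟩ ⟨hu.trans huw.le, hw1⟩ huw
  have hv1 : v < 1 := hvu.trans (psiDigit_lt_one (by omega) hℓ u)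
  exact ⟨⟨⟨hu.trans huw.le, hwt⟩, hv.le, hv1.le⟩, ⟨hu.trans huw.le, hw1.le⟩, ⟨hv.le, hv1.le⟩,
    (hvu.trans hmono).le⟩

lemma frontier_Jstar2_diff_subset_staircase (hb : 2 ≤ b) (hℓ : 2 ≤ ℓ) {t : ℝ}
    (ht : t ≤ 1) : frontier (Jstar2 b ℓ t) \ frontier unitSq ⊆ staircase b ℓ t := by
  rintro p ⟨⟨hclosure, hinterior⟩, hpfrontier⟩
  have hpt : p.1 ≤ t :=
    closure_minimal (fun q hq => hq.1.1.2.le) (isClosed_le continuous_fst continuous_const) hclosure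
  have hpSq : p ∈ unitSq :=
    closure_minimal (t := unitSq) (fun q hq => ⟨hq.2.1, hq.2.2.1⟩)
      (isClosed_Icc.prod isClosed_Icc) hclosure
  have hpIoo : p ∈ Ioo (0 : ℝ) 1 ×ˢ Ioo (0 : ℝ) 1 := by
    rw [← interior_Icc, ← interior_prod_eq]
    by_contra hp
    exact hpfrontier ⟨subset_closure hpSq, hp⟩
  refine ⟨hpIoo, le_psiDigit_of_mem_closure_Jstar2 hb hℓ hclosure hpIoo.1, ?_⟩
  by_contra! h
  obtain ⟨hne, u, hu, hpu⟩ := h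
  exact hinterior
    (mem_interior_Jstar2 hb hℓ ht hu.1 hu.2 (lt_of_le_of_ne hpt hne) hpIoo.2.1 hpu)

/-! ### The partition into elementary intervals -/

/-- The half-open box containing `p` of the grid with columns of width `b ^ (-d₁)` and rows of
height `b ^ (-d₂)`. -/
def adicCell (b d₁ d₂ : ℕ) (p : ℝ × ℝ) : Set (ℝ × ℝ) :=
  {q | ⌊(b : ℝ) ^ d₁ * q.1⌋ = ⌊(b : ℝ) ^ d₁ * p.1⌋ ∧ ⌊(b : ℝ) ^ d₂ * q.2⌋ = ⌊(b : ℝ) ^ d₂ * p.2⌋}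

lemma adicCell_congr {d₁ d₂ : ℕ} {p q : ℝ × ℝ}
    (h₁ : ⌊(b : ℝ) ^ d₁ * p.1⌋ = ⌊(b : ℝ) ^ d₁ * q.1⌋)
    (h₂ : ⌊(b : ℝ) ^ d₂ * p.2⌋ = ⌊(b : ℝ) ^ d₂ * q.2⌋) :
    adicCell b d₁ d₂ p = adicCell b d₁ d₂ q := by
  rw [adicCell, h₁, h₂, adicCell]

lemma exists_setOf_floor_pow_mul_eq_Ico (hb : 0 < b) (d : ℕ) {x : ℝ}
    (hx : x ∈ Ico (0 : ℝ) 1) :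
    ∃ a < b ^ d, {u | ⌊(b : ℝ) ^ d * u⌋ = ⌊(b : ℝ) ^ d * x⌋} =
      Ico ((a : ℝ) / b ^ d) (((a : ℝ) + 1) / b ^ d) := by
  obtain ⟨hnonneg, hlt⟩ := Finset.mem_Ico.mp (floor_pow_mul_mem_Ico hb d hx)
  obtain ⟨a, ha⟩ := Int.eq_ofNat_of_zero_le hnonneg
  rw [ha] at hlt ⊢
  refine ⟨a, by exact_mod_cast hlt, ?_⟩
  ext u
  rw [mem_ofPred_eq, mem_Ico, Int.floor_eq_iff, div_le_iff₀' (by positivity),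
    lt_div_iff₀' (by positivity), Int.cast_natCast]

lemma isElemInterval2_adicCell (hb : 0 < b) (d₁ d₂ : ℕ) {p : ℝ × ℝ}
    (hp : p ∈ Ico (0 : ℝ) 1 ×ˢ Ico (0 : ℝ) 1) :
    IsElemInterval2 b (d₁ + d₂) (adicCell b d₁ d₂ p) := by
  obtain ⟨a₁, ha₁, hcol⟩ := exists_setOf_floor_pow_mul_eq_Ico hb d₁ hp.1
  obtain ⟨a₂, ha₂, hrow⟩ := exists_setOf_floor_pow_mul_eq_Ico hb d₂ hp.2
  refine ⟨d₁, d₂, a₁, a₂, ha₁, ha₂, rfl, ?_⟩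
  rw [← hcol, ← hrow]
  rfl

/-- The row of height `b ^ (-i * (ℓ - 1))` containing `p` lies strictly below the one meeting the
graph of `ψ_ℓ` over `p.1`: the first `i` digits of `p.1` already show that `p` is below it. -/
def IsSeparatedAt (b ℓ : ℕ) (p : ℝ × ℝ) (i : ℕ) : Prop :=
  ⌊(b : ℝ) ^ (i * (ℓ - 1)) * p.2⌋ < ⌊(b : ℝ) ^ (i * (ℓ - 1)) * psiDigit b ℓ p.1⌋

lemma IsSeparatedAt.mono {i j : ℕ} (hb : 0 < b) {p : ℝ × ℝ} (hij : i ≤ j)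
    (h : IsSeparatedAt b ℓ p i) : IsSeparatedAt b ℓ p j := by
  have hle := Nat.mul_le_mul_right (ℓ - 1) hij
  rw [IsSeparatedAt, floor_pow_mul_eq_floor_div hb hle, floor_pow_mul_eq_floor_div hb hle] at h
  exact lt_of_not_ge fun hge => h.not_ge (Int.ediv_le_ediv (by positivity) hge)

/-- The first level at which `p` is separated from the graph of `ψ_ℓ`, truncated at `⌊k / ℓ⌋`. -/
noncomputable def separationLevel (b ℓ k : ℕ) (p : ℝ × ℝ) : ℕ :=
  sInf {i | i = k / ℓ ∨ IsSeparatedAt b ℓ p i}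

/-- The elementary interval of order `k` used to cover `p`. Its height is dictated by the separation
level `i` of `p`; its width is then at most `b ^ (-i)`, because `i * ℓ ≤ k`. -/
def coverCell (b ℓ k : ℕ) (p : ℝ × ℝ) : Set (ℝ × ℝ) :=
  adicCell b (k - separationLevel b ℓ k p * (ℓ - 1)) (separationLevel b ℓ k p * (ℓ - 1)) p

lemma separationLevel_le (b ℓ k : ℕ) (p : ℝ × ℝ) : separationLevel b ℓ k p ≤ k / ℓ :=
  Nat.sInf_le (Or.inl rfl)

lemma add_mul_pred_le_of_le_div {i k : ℕ} (hℓ : 0 < ℓ) (hi : i ≤ k / ℓ) :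
    i + i * (ℓ - 1) ≤ k := by
  rw [← mul_one_add, add_tsub_cancel_of_le (Nat.one_le_iff_ne_zero.mpr hℓ.ne')]
  exact (Nat.le_div_iff_mul_le hℓ).mp hi

lemma separationLevel_add_le (hℓ : 0 < ℓ) (b k : ℕ) (p : ℝ × ℝ) :
    separationLevel b ℓ k p + separationLevel b ℓ k p * (ℓ - 1) ≤ k :=
  add_mul_pred_le_of_le_div hℓ (separationLevel_le b ℓ k p)

lemma not_isSeparatedAt_of_lt {k i : ℕ} {p : ℝ × ℝ} (hi : i < separationLevel b ℓ k p) :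
    ¬ IsSeparatedAt b ℓ p i :=
  fun h => Nat.notMem_of_lt_sInf hi (Or.inr h)

lemma separationLevel_eq_or_isSeparatedAt (b ℓ k : ℕ) (p : ℝ × ℝ) :
    separationLevel b ℓ k p = k / ℓ ∨ IsSeparatedAt b ℓ p (separationLevel b ℓ k p) :=
  Nat.sInf_mem (s := {i | i = k / ℓ ∨ IsSeparatedAt b ℓ p i}) ⟨k / ℓ, Or.inl rfl⟩

lemma separationLevel_congr {k : ℕ} {p q : ℝ × ℝ}
    (h : ∀ i ≤ separationLevel b ℓ k p, (IsSeparatedAt b ℓ p i ↔ IsSeparatedAt b ℓ q i)) :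
    separationLevel b ℓ k p = separationLevel b ℓ k q := by
  refine le_antisymm (le_of_not_gt fun hlt => ?_) (Nat.sInf_le ?_)
  · obtain hq | hq := separationLevel_eq_or_isSeparatedAt b ℓ k q
    · exact (separationLevel_le b ℓ k p).not_gt (hq ▸ hlt)
    · exact not_isSeparatedAt_of_lt hlt ((h _ hlt.le).mpr hq)
  · exact (separationLevel_eq_or_isSeparatedAt b ℓ k p).imp_right (h _ le_rfl).mp

lemma coverCell_congr {k : ℕ} {p q : ℝ × ℝ}
    (hlevel : separationLevel b ℓ k p = separationLevel b ℓ k q)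
    (h₁ : ⌊(b : ℝ) ^ (k - separationLevel b ℓ k p * (ℓ - 1)) * p.1⌋ =
      ⌊(b : ℝ) ^ (k - separationLevel b ℓ k p * (ℓ - 1)) * q.1⌋)
    (h₂ : ⌊(b : ℝ) ^ (separationLevel b ℓ k p * (ℓ - 1)) * p.2⌋ =
      ⌊(b : ℝ) ^ (separationLevel b ℓ k p * (ℓ - 1)) * q.2⌋) :
    coverCell b ℓ k p = coverCell b ℓ k q := by
  rw [coverCell, adicCell_congr h₁ h₂, hlevel, coverCell]

lemma mem_coverCell_self (b ℓ k : ℕ) (p : ℝ × ℝ) : p ∈ coverCell b ℓ k p := ⟨rfl, rfl⟩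

lemma isElemInterval2_coverCell (hb : 0 < b) (hℓ : 0 < ℓ) (k : ℕ) {p : ℝ × ℝ}
    (hp : p ∈ Ico (0 : ℝ) 1 ×ˢ Ico (0 : ℝ) 1) : IsElemInterval2 b k (coverCell b ℓ k p) := by
  have hle := separationLevel_add_le hℓ b k p
  have hcell := isElemInterval2_adicCell hb (k - separationLevel b ℓ k p * (ℓ - 1))
    (separationLevel b ℓ k p * (ℓ - 1)) hp
  rwa [Nat.sub_add_cancel (by omega)] at hcell

lemma coverCell_eq_of_mem {k : ℕ} (hb : 0 < b) (hℓ : 2 ≤ ℓ) {p q : ℝ × ℝ}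
    (hq : q ∈ coverCell b ℓ k p) : coverCell b ℓ k q = coverCell b ℓ k p := by
  have hle := separationLevel_add_le (by omega : 0 < ℓ) b k p
  have hlevel : separationLevel b ℓ k p = separationLevel b ℓ k q := by
    refine separationLevel_congr fun i hi => ?_
    rw [IsSeparatedAt, IsSeparatedAt,
      floor_pow_mul_congr hb (Nat.mul_le_mul_right (ℓ - 1) hi) hq.2,
      floor_pow_mul_psiDigit_congr hb hℓ (floor_pow_mul_congr hb (by omega) hq.1)]
  exact (coverCell_congr hlevel hq.1.symm hq.2.symm).symm

lemma pairwiseDisjoint_range_coverCell (hb : 0 < b) (hℓ : 2 ≤ ℓ) (k : ℕ) :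
    (range (coverCell b ℓ k)).PairwiseDisjoint id := by
  rintro _ ⟨p, rfl⟩ _ ⟨q, rfl⟩ hne
  refine Set.disjoint_left.mpr fun z hzp hzq => hne ?_
  rw [← coverCell_eq_of_mem hb hℓ hzp, coverCell_eq_of_mem hb hℓ hzq]

/-! ### Counting -/

lemma encard_image_le_card_of_key {α β γ : Type*} {f : α → β} {key : α → γ} {s : Set α}
    {K : Finset γ} (hK : MapsTo key s K) (hkey : ∀ p ∈ s, ∀ q ∈ s, key p = key q → f p = f q) :
    (f '' s).encard ≤ K.card := by
  obtain _ | _ := isEmpty_or_nonempty α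
  · simp only [Set.eq_empty_of_isEmpty s, image_empty, encard_empty, zero_le]
  choose! g hg using fun e (he : e ∈ f '' s) => he
  rw [← Set.encard_coe_eq_coe_finsetCard]
  refine Set.encard_le_encard_of_injOn (f := key ∘ g) (fun e he => hK (hg e he).1) ?_
  intro e he e' he' h
  rw [← (hg e he).2, ← (hg e' he').2]
  exact hkey _ (hg e he).1 _ (hg e' he').1 h

lemma floor_pow_mul_eq_floor_psiDigit_of_not_isSeparatedAt {i : ℕ} {p : ℝ × ℝ}
    (hp : p.2 ≤ psiDigit b ℓ p.1) (hsep : ¬ IsSeparatedAt b ℓ p i) :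
    ⌊(b : ℝ) ^ (i * (ℓ - 1)) * p.2⌋ = ⌊(b : ℝ) ^ (i * (ℓ - 1)) * psiDigit b ℓ p.1⌋ :=
  le_antisymm (by gcongr) (not_lt.mp hsep)

lemma encard_coverCell_image_not_separated_le (hb : 0 < b) (hℓ : 2 ≤ ℓ) (k : ℕ) :
    (coverCell b ℓ k '' {p | p.1 ∈ Ico (0 : ℝ) 1 ∧ p.2 ≤ psiDigit b ℓ p.1 ∧
      ¬ IsSeparatedAt b ℓ p (separationLevel b ℓ k p)}).encard ≤
        (b ^ (k - k / ℓ * (ℓ - 1)) : ℕ) := by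
  rw [← Int.toNat_natCast (b ^ _), ← sub_zero ((b ^ _ : ℕ) : ℤ), ← Int.card_Ico]
  refine encard_image_le_card_of_key
    (key := fun p => ⌊(b : ℝ) ^ (k - k / ℓ * (ℓ - 1)) * p.1⌋)
    (fun p hp => floor_pow_mul_mem_Ico hb _ hp.1) ?_
  rintro p ⟨-, hp, hpsep⟩ q ⟨-, hq, hqsep⟩ hcol
  have hplevel := (separationLevel_eq_or_isSeparatedAt b ℓ k p).resolve_right hpsep
  have hqlevel := (separationLevel_eq_or_isSeparatedAt b ℓ k q).resolve_right hqsep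
  have hle := separationLevel_add_le (by omega : 0 < ℓ) b k p
  rw [hplevel] at hpsep hle
  rw [hqlevel] at hqsep
  refine coverCell_congr (hplevel.trans hqlevel.symm) (hplevel ▸ hcol) ?_
  rw [hplevel, floor_pow_mul_eq_floor_psiDigit_of_not_isSeparatedAt hp hpsep,
    floor_pow_mul_eq_floor_psiDigit_of_not_isSeparatedAt hq hqsep]
  exact floor_pow_mul_psiDigit_congr hb hℓ (floor_pow_mul_congr hb (by omega) hcol)

lemma exists_row_of_isSeparatedAt {k : ℕ} (hb : 0 < b) (hℓ : 2 ≤ ℓ) {p : ℝ × ℝ}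
    (hp : 0 ≤ p.2) (hsep : IsSeparatedAt b ℓ p (separationLevel b ℓ k p)) :
    ∃ j, separationLevel b ℓ k p = j + 1 ∧ ∃ s, 0 ≤ s ∧ s < adicDigit b p.1 j ∧
      ⌊(b : ℝ) ^ ((j + 1) * (ℓ - 1)) * p.2⌋ =
        (b : ℤ) ^ (ℓ - 1) * ⌊(b : ℝ) ^ (j * (ℓ - 1)) * psiDigit b ℓ p.1⌋ + s := by
  obtain ⟨j, hj⟩ : ∃ j, separationLevel b ℓ k p = j + 1 := by
    refine Nat.exists_eq_succ_of_ne_zero fun h => ?_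
    rw [h, IsSeparatedAt, zero_mul, pow_zero, one_mul, one_mul, floor_psiDigit hb hℓ] at hsep
    exact hsep.not_ge (Int.floor_nonneg.mpr hp)
  rw [hj] at hsep
  have hbelow : p.2 ≤ psiDigit b ℓ p.1 :=
    le_of_mul_le_mul_left (Int.floor_mono.reflect_lt hsep).le (by positivity)
  have hparent := floor_pow_mul_eq_floor_psiDigit_of_not_isSeparatedAt hbelow
    (not_isSeparatedAt_of_lt (by omega : j < separationLevel b ℓ k p))
  rw [floor_pow_mul_eq_floor_div hb (Nat.mul_le_mul_right (ℓ - 1) (Nat.le_add_right j 1)),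
    ← Nat.sub_mul, Nat.add_sub_cancel_left, one_mul] at hparent
  refine ⟨j, hj, ⌊(b : ℝ) ^ ((j + 1) * (ℓ - 1)) * p.2⌋ -
    (b : ℤ) ^ (ℓ - 1) * ⌊(b : ℝ) ^ (j * (ℓ - 1)) * psiDigit b ℓ p.1⌋, ?_, ?_, by ring⟩
  · rw [← hparent]
    exact sub_nonneg.mpr (Int.mul_ediv_self_le (by positivity))
  · rw [IsSeparatedAt, floor_pow_succ_mul_psiDigit hb hℓ] at hsep
    exact sub_left_lt_of_lt_add hsep

lemma encard_coverCell_image_vertical_le (hb : 0 < b) (hℓ : 2 ≤ ℓ) (k : ℕ) (t : ℝ) :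
    (coverCell b ℓ k '' {p | p.1 = t ∧ 0 ≤ p.2 ∧
      IsSeparatedAt b ℓ p (separationLevel b ℓ k p)}).encard ≤ (k / ℓ * (b - 1) : ℕ) := by
  have hcard : (Finset.range (k / ℓ) ×ˢ Finset.Ico (0 : ℤ) ((b - 1 : ℕ) : ℤ)).card =
      k / ℓ * (b - 1) := by
    rw [Finset.card_product, Finset.card_range, Int.card_Ico, sub_zero, Int.toNat_natCast]
  rw [← hcard]
  refine encard_image_le_card_of_key (key := fun p => (separationLevel b ℓ k p - 1,
    ⌊(b : ℝ) ^ (separationLevel b ℓ k p * (ℓ - 1)) * p.2⌋ - (b : ℤ) ^ (ℓ - 1) *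
      ⌊(b : ℝ) ^ ((separationLevel b ℓ k p - 1) * (ℓ - 1)) * psiDigit b ℓ t⌋)) ?_ ?_
  · rintro p ⟨rfl, hp, hsep⟩
    obtain ⟨j, hj, s, hs, hsdigit, hrow⟩ := exists_row_of_isSeparatedAt hb hℓ hp hsep
    have hle := separationLevel_le b ℓ k p
    have hdigit := adicDigit_lt hb p.1 j
    simp only [hj, hrow, Nat.add_sub_cancel, add_sub_cancel_left, Finset.coe_product, mem_prod,
      Finset.mem_coe, Finset.mem_range, Finset.mem_Ico]
    omega
  · rintro p ⟨hpt, hp, hpsep⟩ q ⟨hqt, hq, hqsep⟩ heq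
    obtain ⟨hlevel, hrow⟩ := Prod.ext_iff.mp heq
    obtain ⟨i, hi, -⟩ := exists_row_of_isSeparatedAt hb hℓ hp hpsep
    obtain ⟨j, hj, -⟩ := exists_row_of_isSeparatedAt hb hℓ hq hqsep
    dsimp only at hlevel hrow
    replace hlevel : separationLevel b ℓ k p = separationLevel b ℓ k q := by omega
    rw [← hlevel] at hrow
    exact coverCell_congr hlevel (by rw [hpt, hqt]) (sub_left_inj.mp hrow)

lemma floor_pow_mul_eq_self_of_isSeparatedAt {i : ℕ} (hb : 0 < b) (hℓ : 2 ≤ ℓ) {p : ℝ × ℝ}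
    (hx : 0 ≤ p.1) (hsep : IsSeparatedAt b ℓ p i)
    (hleft : ∀ u ∈ Ico 0 p.1, psiDigit b ℓ u ≤ p.2) :
    (⌊(b : ℝ) ^ i * p.1⌋ : ℝ) = (b : ℝ) ^ i * p.1 := by
  refine (Int.floor_le _).antisymm (le_of_not_gt fun hlt => hsep.not_ge ?_)
  set u : ℝ := ⌊(b : ℝ) ^ i * p.1⌋ / (b : ℝ) ^ i with hu
  have hu₀ : 0 ≤ u :=
    div_nonneg (Int.cast_nonneg (Int.floor_nonneg.mpr (by positivity))) (by positivity)
  have hup : u < p.1 := (div_lt_iff₀' (by positivity)).mpr hlt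
  have hpre : ⌊(b : ℝ) ^ i * p.1⌋ = ⌊(b : ℝ) ^ i * u⌋ := by
    rw [hu, mul_div_cancel₀ _ (by positivity), Int.floor_intCast]
  rw [floor_pow_mul_psiDigit_congr hb hℓ hpre]
  have := hleft u ⟨hu₀, hup⟩
  gcongr

lemma separationLevel_le_of_fst_eq {k : ℕ} (hb : 0 < b) (hℓ : 2 ≤ ℓ) {p q : ℝ × ℝ}
    (hx : 0 ≤ p.1) (hpsep : IsSeparatedAt b ℓ p (separationLevel b ℓ k p))
    (hpleft : ∀ u ∈ Ico 0 p.1, psiDigit b ℓ u ≤ p.2) (hpq : p.1 = q.1) (hq : 0 ≤ q.2)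
    (hqsep : IsSeparatedAt b ℓ q (separationLevel b ℓ k q)) :
    separationLevel b ℓ k q ≤ separationLevel b ℓ k p := by
  by_contra! hlt
  obtain ⟨j, hj, s, hs, hsdigit, -⟩ := exists_row_of_isSeparatedAt hb hℓ hq hqsep
  have hdigit : adicDigit b q.1 j = 0 := hpq ▸ adicDigit_eq_zero_of_le (by omega)
    (floor_pow_mul_eq_self_of_isSeparatedAt hb hℓ hx hpsep hpleft)
  omega

lemma floor_pow_mul_eq_sub_one_of_isSeparatedAt {k : ℕ} (hb : 0 < b) (hℓ : 2 ≤ ℓ)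
    {p : ℝ × ℝ} (hx : 0 ≤ p.1) (hp : 0 ≤ p.2)
    (hsep : IsSeparatedAt b ℓ p (separationLevel b ℓ k p))
    (hleft : ∀ u ∈ Ico 0 p.1, psiDigit b ℓ u ≤ p.2) :
    ⌊(b : ℝ) ^ (separationLevel b ℓ k p * (ℓ - 1)) * p.2⌋ =
      ⌊(b : ℝ) ^ (separationLevel b ℓ k p * (ℓ - 1)) * psiDigit b ℓ p.1⌋ - 1 := by
  refine (Int.le_sub_one_of_lt hsep).antisymm ?_
  obtain ⟨j, hj, s, hs, hsdigit, -⟩ := exists_row_of_isSeparatedAt hb hℓ hp hsep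
  have hdigit : 0 < adicDigit b p.1 j := by omega
  rw [hj, ← floor_pow_succ_mul_psiDigit_sub hb hℓ hdigit]
  have hfloor : 1 ≤ ⌊(b : ℝ) ^ (j + 1) * p.1⌋ := by
    have : 0 ≤ (b : ℤ) * ⌊(b : ℝ) ^ j * p.1⌋ :=
      mul_nonneg (by positivity) (Int.floor_nonneg.mpr (by positivity))
    rw [adicDigit] at hdigit
    omega
  have hnonneg : 1 / (b : ℝ) ^ (j + 1) ≤ p.1 := by
    rw [div_le_iff₀' (by positivity)]
    exact_mod_cast Int.le_floor.mp hfloor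
  have := hleft (p.1 - 1 / (b : ℝ) ^ (j + 1))
    ⟨sub_nonneg.mpr hnonneg, sub_lt_self _ (by positivity)⟩
  gcongr

lemma encard_coverCell_image_jumps_le (hb : 0 < b) (hℓ : 2 ≤ ℓ) (k : ℕ) :
    (coverCell b ℓ k '' {p | p.1 ∈ Ico (0 : ℝ) 1 ∧ 0 ≤ p.2 ∧
      IsSeparatedAt b ℓ p (separationLevel b ℓ k p) ∧
        ∀ u ∈ Ico 0 p.1, psiDigit b ℓ u ≤ p.2}).encard ≤ (b ^ (k / ℓ) : ℕ) := by
  rw [← Int.toNat_natCast (b ^ _), ← sub_zero ((b ^ _ : ℕ) : ℤ), ← Int.card_Ico]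
  refine encard_image_le_card_of_key (key := fun p => ⌊(b : ℝ) ^ (k / ℓ) * p.1⌋)
    (fun p hp => floor_pow_mul_mem_Ico hb _ hp.1) ?_
  rintro p ⟨hpx, hp, hpsep, hpleft⟩ q ⟨hqx, hq, hqsep, hqleft⟩ hcol
  have hpq : p.1 = q.1 := by
    refine mul_left_cancel₀ (by positivity : (b : ℝ) ^ (k / ℓ) ≠ 0) ?_
    rw [← floor_pow_mul_eq_self_of_isSeparatedAt hb hℓ hpx.1
        (hpsep.mono hb (separationLevel_le b ℓ k p)) hpleft, hcol,
      floor_pow_mul_eq_self_of_isSeparatedAt hb hℓ hqx.1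
        (hqsep.mono hb (separationLevel_le b ℓ k q)) hqleft]
  have hlevel : separationLevel b ℓ k p = separationLevel b ℓ k q :=
    (separationLevel_le_of_fst_eq hb hℓ hqx.1 hqsep hqleft hpq.symm hp hpsep).antisymm
      (separationLevel_le_of_fst_eq hb hℓ hpx.1 hpsep hpleft hpq hq hqsep)
  refine coverCell_congr hlevel (by rw [hpq]) ?_
  rw [floor_pow_mul_eq_sub_one_of_isSeparatedAt hb hℓ hpx.1 hp hpsep hpleft, hlevel,
    floor_pow_mul_eq_sub_one_of_isSeparatedAt hb hℓ hqx.1 hq hqsep hqleft, hpq]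

lemma staircase_subset (b ℓ k : ℕ) (t : ℝ) : staircase b ℓ t ⊆
    {p | p.1 ∈ Ico (0 : ℝ) 1 ∧ p.2 ≤ psiDigit b ℓ p.1 ∧
      ¬ IsSeparatedAt b ℓ p (separationLevel b ℓ k p)} ∪
    ({p | p.1 ∈ Ico (0 : ℝ) 1 ∧ 0 ≤ p.2 ∧ IsSeparatedAt b ℓ p (separationLevel b ℓ k p) ∧
      ∀ u ∈ Ico 0 p.1, psiDigit b ℓ u ≤ p.2} ∪
    {p | p.1 = t ∧ 0 ≤ p.2 ∧ IsSeparatedAt b ℓ p (separationLevel b ℓ k p)}) := by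
  rintro p ⟨⟨hx, hy⟩, hbelow, hp⟩
  by_cases hsep : IsSeparatedAt b ℓ p (separationLevel b ℓ k p)
  · obtain ht | hleft := hp
    · exact Or.inr (Or.inr ⟨ht, hy.1.le, hsep⟩)
    · exact Or.inr (Or.inl ⟨Ioo_subset_Ico_self hx, hy.1.le, hsep, hleft⟩)
  · exact Or.inl ⟨Ioo_subset_Ico_self hx, hbelow, hsep⟩

lemma encard_coverCell_image_staircase_le (hb : 0 < b) (hℓ : 2 ≤ ℓ) (k : ℕ) (t : ℝ) :
    (coverCell b ℓ k '' staircase b ℓ t).encard ≤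
      (b ^ (k - k / ℓ * (ℓ - 1)) + (b ^ (k / ℓ) + k / ℓ * (b - 1)) : ℕ) := by
  grw [staircase_subset b ℓ k t, image_union, image_union, encard_union_le, encard_union_le,
    encard_coverCell_image_not_separated_le hb hℓ k, encard_coverCell_image_jumps_le hb hℓ k,
    encard_coverCell_image_vertical_le hb hℓ k t]
  push_cast
  rfl

lemma sub_div_mul_pred_add_one_le (hℓ : 2 ≤ ℓ) (k : ℕ) :
    k - k / ℓ * (ℓ - 1) + 1 ≤ ℓ - 1 + (k + ℓ - 1) / ℓ := by
  have hmod : k - k / ℓ * (ℓ - 1) = k / ℓ + k % ℓ := by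
    refine Nat.sub_eq_of_eq_add ?_
    rw [add_right_comm, ← mul_one_add, add_tsub_cancel_of_le (by omega), Nat.div_add_mod']
  obtain hr | hr := (k % ℓ).eq_zero_or_pos
  · have : k / ℓ ≤ (k + ℓ - 1) / ℓ := Nat.div_le_div_right (by omega)
    omega
  · have hceil : k / ℓ + 1 ≤ (k + ℓ - 1) / ℓ := by
      rw [Nat.le_div_iff_mul_le (by omega), add_one_mul]
      have := Nat.div_add_mod' k ℓ
      omega
    have := Nat.mod_lt k (by omega : 0 < ℓ)
    omega

lemma coverCell_count_le (hb : 2 ≤ b) (hℓ : 2 ≤ ℓ) (k : ℕ) :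
    b ^ (k - k / ℓ * (ℓ - 1)) + (b ^ (k / ℓ) + k / ℓ * (b - 1)) ≤
      ℓ * b ^ (ℓ - 1) * b ^ ((k + ℓ - 1) / ℓ) := by
  have hbernoulli : k / ℓ * (b - 1) ≤ b ^ (k / ℓ) := by
    have := one_add_le_pow_of_two_add_nonneg (a := b - 1) (Nat.zero_le _) (k / ℓ)
    rw [Nat.add_sub_of_le (by omega), Nat.cast_id] at this
    omega
  have hmono : b ^ (k / ℓ) ≤ b ^ (k - k / ℓ * (ℓ - 1)) := by
    have := add_mul_pred_le_of_le_div (by omega : 0 < ℓ) (le_refl (k / ℓ))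
    exact Nat.pow_le_pow_right (by omega) (by omega)
  calc b ^ (k - k / ℓ * (ℓ - 1)) + (b ^ (k / ℓ) + k / ℓ * (b - 1))
      ≤ 3 * b ^ (k - k / ℓ * (ℓ - 1)) := by omega
    _ ≤ ℓ * b * b ^ (k - k / ℓ * (ℓ - 1)) := by
        gcongr
        nlinarith
    _ = ℓ * b ^ (k - k / ℓ * (ℓ - 1) + 1) := by ring
    _ ≤ ℓ * b ^ (ℓ - 1 + (k + ℓ - 1) / ℓ) :=
        Nat.mul_le_mul_left _
          (Nat.pow_le_pow_right (by omega) (sub_div_mul_pred_add_one_le hℓ k))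
    _ = ℓ * b ^ (ℓ - 1) * b ^ ((k + ℓ - 1) / ℓ) := by rw [pow_add, mul_assoc]

end

/-- **Covering number of the digit density `ψ_ℓ` at arbitrary order** (Example 1 of the
paper): for every `k`, `Γ_k(ψ_ℓ) ≤ ℓ b^{k/ℓ + ℓ - 1} = ℓ b^{ℓ-1} b^{⌈k/ℓ⌉}`, i.e. for
every `t ∈ [0,1]` the set `∂J_t* \ ∂[0,1]²` is covered by at most that many pairwise
disjoint `b`-adic elementary intervals of order `k`. -/
theorem covering_number_psiDigit (b : ℕ) (hb : 2 ≤ b) (ℓ : ℕ) (hℓ : 2 ≤ ℓ) (k : ℕ) :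
    ∀ t ∈ Icc (0 : ℝ) 1, ∃ v : ℕ,
      v ≤ ℓ * b ^ (ℓ - 1) * b ^ ((k + ℓ - 1) / ℓ) ∧
      ∃ U : Fin v → Set (ℝ × ℝ),
        (∀ i, IsElemInterval2 b k (U i)) ∧
        (∀ i j, i ≠ j → Disjoint (U i) (U j)) ∧
        frontier (Jstar2 b ℓ t) \ frontier unitSq ⊆ ⋃ i, U i := by
  intro t ht
  have hb₀ : 0 < b := by omega
  have hcard := encard_coverCell_image_staircase_le hb₀ hℓ k t
  obtain ⟨v, U, hinj, hrange⟩ := (finite_of_encard_le_coe hcard).fin_param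
  refine ⟨v, ?_, U, fun i => ?_, fun i j hij => ?_, ?_⟩
  · rw [← hrange, ← image_univ, hinj.encard_image, encard_univ, ENat.card_eq_coe_fintype_card,
      Fintype.card_fin] at hcard
    exact (Nat.cast_le.mp hcard).trans (coverCell_count_le hb hℓ k)
  · obtain ⟨p, hp, hpU⟩ := hrange ▸ mem_range_self (f := U) i
    rw [← hpU]
    exact isElemInterval2_coverCell hb₀ (by omega) k
      (prod_mono Ioo_subset_Ico_self Ioo_subset_Ico_self hp.1)
  · have hmem : ∀ i, U i ∈ range (coverCell b ℓ k) := fun i =>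
      image_subset_range _ _ (hrange ▸ mem_range_self i)
    exact pairwiseDisjoint_range_coverCell hb₀ hℓ k (hmem i) (hmem j) (hinj.ne hij)
  · rw [← sUnion_range, hrange]
    exact fun p hp => ⟨_, mem_image_of_mem _
      (frontier_Jstar2_diff_subset_staircase hb hℓ ht.2 hp), mem_coverCell_self b ℓ k p⟩
end
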